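/- Let a : ℝ → [0,1] satisfy (A1') and have √a κ-Lipschitz, and H ∈ 𝓗_sqc(α0,α1,γ,η) with γ > 2; let λ0 := inf{μ : a u'' + H(x,u') = μ admits a continuous viscosity supersolution on ℝ}, let λ > λ0 and let u_{λ0} be a Lipschitz viscosity solution of a u'' + H(x,u') = λ0 on ℝ. Then: (a) there exists a unique viscosity solution u⁺_λ of a(x)u'' + H(x,u') = λ on ℝ satisfying (u⁺_λ)' > u'_{λ0} a.e. on ℝ and u⁺_λ(0) = 0; u⁺_λ is of class C¹ on ℝ, of class C² on A := {a > 0}, satisfies (u⁺_λ)' = p⁺_λ(·) on {a = 0}, is a classical pointwise solution of the equation, and does not depend on the choice of u_{λ0}; (b) there exists a unique viscosity solution u⁻_λ with (u⁻_λ)' < u'_{λ0} a.e. on ℝ and u⁻_λ(0) = 0, which is C¹ on ℝ, C² on A, satisfies (u⁻_λ)' = p⁻_λ(·) on {a = 0}, is a classical solution, and does not depend on the choice of u_{λ0}. -/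

import Mathlib

open Real Set Filter Topology MeasureTheory

noncomputable section

/-- The Hamiltonian class `𝓗(α₀, α₁, γ)`: growth condition (H1) and the local
Lipschitz conditions (H2), (H3). -/
def HamClass (a0 a1 g : ℝ) (H : ℝ → ℝ → ℝ) : Prop :=
  (∀ x p : ℝ, a0 * |p| ^ g - 1 / a0 ≤ H x p) ∧
  (∀ x p : ℝ, H x p ≤ a1 * (|p| ^ g + 1)) ∧
  (∀ x p q : ℝ, |H x p - H x q| ≤ a1 * (|p| + |q| + 1) ^ (g - 1) * |p - q|) ∧
  (∀ x y p : ℝ, |H x p - H y p| ≤ a1 * (|p| ^ g + 1) * |x - y|)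

/-- The strictly quasiconvex class `𝓗_sqc(α₀, α₁, γ, η)` with (unique) minimizer map
`phat`. -/
def HamSqc (a0 a1 g eta : ℝ) (H : ℝ → ℝ → ℝ) (phat : ℝ → ℝ) : Prop :=
  HamClass a0 a1 g H ∧
  (∀ x p : ℝ, H x (phat x) ≤ H x p) ∧
  (∀ x p : ℝ, (∀ q : ℝ, H x p ≤ H x q) → p = phat x) ∧
  (∀ x p1 p2 : ℝ, p1 < p2 → p2 ≤ phat x → eta * |p1 - p2| ≤ H x p1 - H x p2) ∧
  (∀ x p1 p2 : ℝ, phat x ≤ p1 → p1 < p2 → eta * |p1 - p2| ≤ H x p2 - H x p1)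

/-- A continuous `u` is a viscosity supersolution of `a(x) u'' + H(x, u') = lam` on `U`:
at every local minimum point `x0 ∈ U` of `u - φ`, with `φ` of class `C²`, one has
`a(x0) φ''(x0) + H(x0, φ'(x0)) ≤ lam`. -/
def ViscSuperOn (a : ℝ → ℝ) (H : ℝ → ℝ → ℝ) (lam : ℝ) (U : Set ℝ) (u : ℝ → ℝ) : Prop :=
  ∀ φ : ℝ → ℝ, ContDiff ℝ 2 φ → ∀ x0 ∈ U, IsLocalMin (fun x => u x - φ x) x0 →
    a x0 * deriv (deriv φ) x0 + H x0 (deriv φ x0) ≤ lam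

/-- Viscosity subsolution of `a(x) u'' + H(x, u') = lam` on `U`. -/
def ViscSubOn (a : ℝ → ℝ) (H : ℝ → ℝ → ℝ) (lam : ℝ) (U : Set ℝ) (u : ℝ → ℝ) : Prop :=
  ∀ φ : ℝ → ℝ, ContDiff ℝ 2 φ → ∀ x0 ∈ U, IsLocalMax (fun x => u x - φ x) x0 →
    lam ≤ a x0 * deriv (deriv φ) x0 + H x0 (deriv φ x0)

/-- Viscosity solution of `a(x) u'' + H(x, u') = lam` on `U`. -/
def ViscSolOn (a : ℝ → ℝ) (H : ℝ → ℝ → ℝ) (lam : ℝ) (U : Set ℝ) (u : ℝ → ℝ) : Prop :=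
  ViscSubOn a H lam U u ∧ ViscSuperOn a H lam U u

/-- The critical value `λ₀`: the infimum of the levels `lam` at which the stationary
equation `a u'' + H(x, u') = lam` admits a continuous viscosity supersolution on `ℝ`. -/
def CriticalValue (a : ℝ → ℝ) (H : ℝ → ℝ → ℝ) : ℝ :=
  sInf {lam : ℝ | ∃ u : ℝ → ℝ, Continuous u ∧ ViscSuperOn a H lam Set.univ u}

/-- Condition (A1'): `a ≢ 0` and every connected component of `A := {a > 0}` is bounded
(components of an open subset of `ℝ` are automatically open intervals). -/
def CondA1' (a : ℝ → ℝ) : Prop :=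
  (∃ x, a x ≠ 0) ∧
  ∀ x, 0 < a x → Bornology.IsBounded (connectedComponentIn {y : ℝ | 0 < a y} x)

/-!
On a component `(l, r)` of `{a > 0}` the slope `f = u'` of a solution solves the first order
equation `a f' + H(x, f) = λ`. Since `a` vanishes quadratically at `l` and `r` while `H` grows at
least quadratically, `f` is bounded and has limits at `l` and `r`, which are roots of `H = λ`. If
`f` lies above a slope at a lower level `λ₀`, these limits are the larger roots `p⁺`, and there is
only one such `f`, because near `p⁺` the Hamiltonian increases in the momentum. It exists as the
limit of solutions started from a large constant at points tending to `l`, the lower slope serving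
as a barrier. Glued with `p⁺` on `{a = 0}`, these slopes form a continuous function, whose primitive
is `u⁺`.

Conversely, every viscosity solution is semiconcave and semiconvex, hence `C²`, on `{a > 0}`, is
Lipschitz on `ℝ`, and satisfies `H(x, u') = λ` wherever it is differentiable on `{a = 0}`; so its
derivative is determined almost everywhere by the branch it lies on. The reflection `x ↦ -x`
exchanges `u⁺` and `u⁻`.
-/

/-! ### Scalar ordinary differential equations -/

theorem exists_hasDerivWithinAt_of_lipschitzWith {E : Type*} [NormedAddCommGroup E]
    [NormedSpace ℝ E] [CompleteSpace E] {v : ℝ → E → E} {c d : ℝ} {K L : NNReal}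
    (hlip : ∀ t ∈ Icc c d, LipschitzWith K (v t)) (hcont : ∀ x, ContinuousOn (v · x) (Icc c d))
    (hbound : ∀ t ∈ Icc c d, ∀ x, ‖v t x‖ ≤ L) {t₀ : ℝ} (ht₀ : t₀ ∈ Icc c d) (x₀ : E) :
    ∃ f : ℝ → E, f t₀ = x₀ ∧ ∀ t ∈ Icc c d, HasDerivWithinAt f (v t (f t)) (Icc c d) t := by
  have hmax : 0 ≤ max (d - t₀) (t₀ - c) := le_max_of_le_left (by linarith [ht₀.2])
  have hPL : IsPicardLindelof v (⟨t₀, ht₀⟩ : Icc c d) x₀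
      (L * ⟨max (d - t₀) (t₀ - c), hmax⟩) 0 L K :=
    { lipschitzOnWith := fun t ht => (hlip t ht).lipschitzOnWith
      continuousOn := fun x _ => hcont x
      norm_le := fun t ht x _ => hbound t ht x
      mul_max_le := by rw [NNReal.coe_zero, sub_zero]; exact le_rfl }
  exact hPL.exists_eq_forall_mem_Icc_hasDerivWithinAt₀

theorem le_of_hasDerivWithinAt_of_lipschitzOnWith {v : ℝ → ℝ → ℝ} {f g : ℝ → ℝ} {c d : ℝ}
    (hv : ∀ M : ℝ, ∃ K : NNReal, ∀ t ∈ Icc c d, LipschitzOnWith K (v t) (Icc (-M) M))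
    (hf : ContinuousOn f (Icc c d))
    (hf' : ∀ t ∈ Ico c d, HasDerivWithinAt f (v t (f t)) (Ici t) t)
    (hg : ContinuousOn g (Icc c d))
    (hg' : ∀ t ∈ Ico c d, HasDerivWithinAt g (v t (g t)) (Ici t) t)
    (hc : f c ≤ g c) {x : ℝ} (hx : x ∈ Icc c d) : f x ≤ g x := by
  by_contra! hlt
  have hsub : Icc c x ⊆ Icc c d := Icc_subset_Icc_right hx.2
  obtain ⟨t, ht, hteq⟩ : ∃ t ∈ Icc c x, f t - g t = 0 :=
    intermediate_value_Icc hx.1 ((hf.sub hg).mono hsub) ⟨sub_nonpos.2 hc, sub_nonneg.2 hlt.le⟩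
  have hsub' : Icc t x ⊆ Icc c d := (Icc_subset_Icc_left ht.1).trans hsub
  obtain ⟨Mf, hMf⟩ := isCompact_Icc.exists_bound_of_continuousOn (hf.mono hsub')
  obtain ⟨Mg, hMg⟩ := isCompact_Icc.exists_bound_of_continuousOn (hg.mono hsub')
  obtain ⟨K, hK⟩ := hv (max Mf Mg)
  have hIco : ∀ s ∈ Ico t x, s ∈ Ico c d := fun s hs =>
    ⟨ht.1.trans hs.1, hs.2.trans_le hx.2⟩
  have heq : EqOn f g (Icc t x) := ODE_solution_unique_of_mem_Icc_right (v := v)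
    (s := fun _ => Icc (-max Mf Mg) (max Mf Mg))
    (fun s hs => hK s (Ico_subset_Icc_self (hIco s hs)))
    (hf.mono hsub') (fun s hs => hf' s (hIco s hs))
    (fun s hs => abs_le.1 ((hMf s (Ico_subset_Icc_self hs)).trans (le_max_left _ _)))
    (hg.mono hsub') (fun s hs => hg' s (hIco s hs))
    (fun s hs => abs_le.1 ((hMg s (Ico_subset_Icc_self hs)).trans (le_max_right _ _)))
    (by linarith)
  exact hlt.ne' (heq (right_mem_Icc.2 ht.2))

theorem integral_eq_sub_of_tendsto_of_hasDerivAt {v : ℝ → ℝ → ℝ} {F : ℕ → ℝ → ℝ} {f : ℝ → ℝ}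
    {c d B : ℝ} (hcd : c ≤ d)
    (hv : ContinuousOn (fun z : ℝ × ℝ => v z.1 z.2) (Icc c d ×ˢ Icc (-B) B))
    (hF : ∀ n, ∀ t ∈ Icc c d, HasDerivAt (F n) (v t (F n t)) t)
    (hB : ∀ n, ∀ t ∈ Icc c d, F n t ∈ Icc (-B) B)
    (hlim : ∀ t ∈ Icc c d, Tendsto (fun n => F n t) atTop (𝓝 (f t))) :
    ∫ t in c..d, v t (f t) = f d - f c := by
  obtain ⟨L, hL⟩ := (isCompact_Icc.prod isCompact_Icc).exists_bound_of_continuousOn hv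
  have hsub : uIoc c d ⊆ Icc c d := uIoc_of_le hcd ▸ Ioc_subset_Icc_self
  have hfB : ∀ t ∈ Icc c d, f t ∈ Icc (-B) B := fun t ht =>
    isClosed_Icc.mem_of_tendsto (hlim t ht) (Eventually.of_forall fun n => hB n t ht)
  have hvF : ∀ n, ContinuousOn (fun t => v t (F n t)) (Icc c d) := fun n =>
    hv.comp (continuousOn_id.prodMk fun t ht => (hF n t ht).continuousAt.continuousWithinAt)
      fun t ht => ⟨ht, hB n t ht⟩
  have hintegral : Tendsto (fun n => ∫ t in c..d, v t (F n t)) atTop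
      (𝓝 (∫ t in c..d, v t (f t))) := by
    refine intervalIntegral.tendsto_integral_filter_of_dominated_convergence (fun _ => L)
      (Eventually.of_forall fun n => ?_) (Eventually.of_forall fun n => ae_of_all _ fun t ht => ?_)
      intervalIntegrable_const (ae_of_all _ fun t ht => ?_)
    · exact ((hvF n).mono hsub).aestronglyMeasurable measurableSet_uIoc
    · exact hL (t, F n t) ⟨hsub ht, hB n t (hsub ht)⟩
    · have hpair : Tendsto (fun n => (t, F n t)) atTop (𝓝[Icc c d ×ˢ Icc (-B) B] (t, f t)) :=
        tendsto_nhdsWithin_iff.2 ⟨tendsto_const_nhds.prodMk_nhds (hlim t (hsub ht)),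
          Eventually.of_forall fun n => ⟨hsub ht, hB n t (hsub ht)⟩⟩
      exact (hv (t, f t) ⟨hsub ht, hfB t (hsub ht)⟩).tendsto.comp hpair
  refine tendsto_nhds_unique (hintegral.congr fun n => ?_)
    ((hlim d (right_mem_Icc.2 hcd)).sub (hlim c (left_mem_Icc.2 hcd)))
  refine intervalIntegral.integral_eq_sub_of_hasDerivAt (fun t ht => hF n t ?_) ?_
  · rwa [uIcc_of_le hcd] at ht
  · exact ContinuousOn.intervalIntegrable (uIcc_of_le hcd ▸ hvF n)

theorem hasDerivAt_of_tendsto_of_hasDerivAt {v : ℝ → ℝ → ℝ} {F : ℕ → ℝ → ℝ} {f : ℝ → ℝ} {c d B : ℝ}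
    (hv : ContinuousOn (fun z : ℝ × ℝ => v z.1 z.2) (Icc c d ×ˢ Icc (-B) B))
    (hF : ∀ n, ∀ t ∈ Icc c d, HasDerivAt (F n) (v t (F n t)) t)
    (hB : ∀ n, ∀ t ∈ Icc c d, F n t ∈ Icc (-B) B)
    (hlim : ∀ t ∈ Icc c d, Tendsto (fun n => F n t) atTop (𝓝 (f t))) {x : ℝ} (hx : x ∈ Ioo c d) :
    HasDerivAt f (v x (f x)) x := by
  obtain ⟨L, hL⟩ := (isCompact_Icc.prod isCompact_Icc).exists_bound_of_continuousOn hv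
  have hlip : ∀ s ∈ Icc c d, ∀ t ∈ Icc c d, dist (f s) (f t) ≤ L.toNNReal * dist s t := by
    intro s hs t ht
    refine le_of_tendsto ((hlim s hs).dist (hlim t ht)) (Eventually.of_forall fun n => ?_)
    rw [dist_eq_norm, dist_eq_norm]
    exact (convex_Icc c d).norm_image_sub_le_of_norm_hasDerivWithin_le
      (fun u hu => (hF n u hu).hasDerivWithinAt)
      (fun u hu => (hL (u, F n u) ⟨hu, hB n u hu⟩).trans (Real.le_coe_toNNReal L)) ht hs
  have hvf : ContinuousOn (fun t => v t (f t)) (Icc c d) :=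
    hv.comp (continuousOn_id.prodMk (LipschitzOnWith.of_dist_le_mul hlip).continuousOn)
      fun t ht => ⟨ht, isClosed_Icc.mem_of_tendsto (hlim t ht)
        (Eventually.of_forall fun n => hB n t ht)⟩
  have hprim : HasDerivAt (fun y => ∫ t in c..y, v t (f t)) (v x (f x)) x :=
    intervalIntegral.integral_hasDerivAt_right
      ((hvf.mono (Icc_subset_Icc_right hx.2.le)).intervalIntegrable_of_Icc hx.1.le)
      ((hvf.mono Ioo_subset_Icc_self).stronglyMeasurableAtFilter isOpen_Ioo x hx)
      (hvf.continuousAt (Icc_mem_nhds hx.1 hx.2))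
  refine (hprim.const_add (f c)).congr_of_eventuallyEq ?_
  filter_upwards [Icc_mem_nhds hx.1 hx.2] with y hy
  have hsub : Icc c y ⊆ Icc c d := Icc_subset_Icc_right hy.2
  rw [integral_eq_sub_of_tendsto_of_hasDerivAt hy.1 (hv.mono (prod_mono_left hsub))
    (fun n t ht => hF n t (hsub ht)) (fun n t ht => hB n t (hsub ht))
    (fun t ht => hlim t (hsub ht)), add_sub_cancel]

theorem tendsto_atBot_of_div_sq_le_deriv {f f' : ℝ → ℝ} {l r c : ℝ} (hlr : l < r) (hc : 0 < c)
    (hf : ∀ x ∈ Ioo l r, HasDerivAt f (f' x) x) (hf' : ∀ x ∈ Ioo l r, c / (x - l) ^ 2 ≤ f' x) :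
    Tendsto f (𝓝[>] l) atBot := by
  have hderiv : ∀ x ∈ Ioo l r, HasDerivAt (fun x => f x + c * (x - l)⁻¹)
      (f' x + c * (-1 / (x - l) ^ 2)) x := fun x hx =>
    (hf x hx).add ((((hasDerivAt_id x).sub_const l).fun_inv (sub_pos.2 hx.1).ne').const_mul c)
  have hmono : MonotoneOn (fun x => f x + c * (x - l)⁻¹) (Ioo l r) := by
    refine monotoneOn_of_deriv_nonneg (convex_Ioo l r)
      (fun x hx => (hderiv x hx).continuousAt.continuousWithinAt) ?_ ?_ <;> rw [interior_Ioo]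
    · exact fun x hx => (hderiv x hx).differentiableAt.differentiableWithinAt
    · intro x hx
      rw [(hderiv x hx).deriv, mul_div_assoc', mul_neg_one, neg_div]
      linarith [hf' x hx]
  obtain ⟨y, hy⟩ := nonempty_Ioo.2 hlr
  have hsub : Tendsto (fun x => x - l) (𝓝[>] l) (𝓝[>] 0) := by
    refine tendsto_nhdsWithin_iff.2 ⟨tendsto_nhdsWithin_of_tendsto_nhds ?_, ?_⟩
    · exact (continuous_sub_right l).tendsto' _ _ (sub_self l)
    · filter_upwards [self_mem_nhdsWithin] with x hx using sub_pos.2 (mem_Ioi.1 hx)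
  have hinv : Tendsto (fun x => c * (x - l)⁻¹) (𝓝[>] l) atTop :=
    (tendsto_inv_nhdsGT_zero.comp hsub).const_mul_atTop hc
  refine tendsto_atBot_mono' _ ?_ (tendsto_atBot_add_const_left _ (f y + c * (y - l)⁻¹)
    (tendsto_neg_atTop_atBot.comp hinv))
  filter_upwards [Ioo_mem_nhdsGT hy.1] with x hx
  have := hmono ⟨hx.1, hx.2.trans hy.2⟩ hy hx.2.le
  simp only [Function.comp_apply]
  linarith

/-! ### Degenerate coefficients and quasiconvex Hamiltonians -/

/-- A nonnegative continuous second order coefficient that vanishes quadratically at each of its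
zeros, uniformly. Its zeros are unbounded in both directions, which encodes that the connected
components of `{0 < a}` are bounded. -/
structure IsDegenerateDiffusion (a : ℝ → ℝ) : Prop where
  nonneg : ∀ x, 0 ≤ a x
  continuous : Continuous a
  exists_le_sq : ∃ C > 0, ∀ x y, a y = 0 → a x ≤ C * (x - y) ^ 2
  exists_zero_le : ∀ x, ∃ y ≤ x, a y = 0
  exists_zero_ge : ∀ x, ∃ y ≥ x, a y = 0

/-- `H` exceeds the level `lam` by a multiple of `p ^ 2`, uniformly in `x`, as soon as `R ≤ |p|`. -/
def SuperquadraticBeyond (H : ℝ → ℝ → ℝ) (lam R : ℝ) : Prop :=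
  1 ≤ R ∧ ∃ c > 0, ∀ x p, R ≤ |p| → c * p ^ 2 ≤ H x p - lam

/-- A continuous Hamiltonian, locally Lipschitz in the momentum, at least quadratically coercive,
and strictly decreasing, then strictly increasing in the momentum, with turning point `phat x`. -/
structure IsQuasiconvexHamiltonian (H : ℝ → ℝ → ℝ) (phat : ℝ → ℝ) : Prop where
  continuous : Continuous fun z : ℝ × ℝ => H z.1 z.2
  exists_lipschitzOnWith : ∀ M : ℝ, ∃ K : NNReal, ∀ x, LipschitzOnWith K (H x) (Icc (-M) M)
  exists_superquadraticBeyond : ∀ lam, ∃ R, SuperquadraticBeyond H lam R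
  strictAntiOn : ∀ x, StrictAntiOn (H x) (Iic (phat x))
  strictMonoOn : ∀ x, StrictMonoOn (H x) (Ici (phat x))

/-- The interval `(l, r)` is a bounded connected component of `{0 < a}`. -/
structure IsComponent (a : ℝ → ℝ) (l r : ℝ) : Prop where
  lt : l < r
  left_eq_zero : a l = 0
  right_eq_zero : a r = 0
  pos : ∀ x ∈ Ioo l r, 0 < a x

/-- `f` solves on `s` the first order equation `a f' + H(x, f) = lam` satisfied, where `a > 0`, by
the derivative of a solution of `a u'' + H(x, u') = lam`. -/
def IsSlopeOn (a : ℝ → ℝ) (H : ℝ → ℝ → ℝ) (lam : ℝ) (s : Set ℝ) (f : ℝ → ℝ) : Prop :=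
  ∀ x ∈ s, HasDerivAt f ((lam - H x (f x)) / a x) x

section Reflection

variable {a : ℝ → ℝ} {H : ℝ → ℝ → ℝ} {phat f : ℝ → ℝ} {lam l r : ℝ} {s : Set ℝ}

theorem IsDegenerateDiffusion.reflect (ha : IsDegenerateDiffusion a) :
    IsDegenerateDiffusion fun x => a (-x) where
  nonneg x := ha.nonneg (-x)
  continuous := ha.continuous.comp continuous_neg
  exists_le_sq := by
    obtain ⟨C, hC, h⟩ := ha.exists_le_sq
    exact ⟨C, hC, fun x y hy => (h (-x) (-y) hy).trans_eq (by ring)⟩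
  exists_zero_le x := by
    obtain ⟨y, hy, hay⟩ := ha.exists_zero_ge (-x)
    exact ⟨-y, neg_le.1 hy, by rwa [neg_neg]⟩
  exists_zero_ge x := by
    obtain ⟨y, hy, hay⟩ := ha.exists_zero_le (-x)
    exact ⟨-y, le_neg.1 hy, by rwa [neg_neg]⟩

theorem SuperquadraticBeyond.reflect {R : ℝ} (h : SuperquadraticBeyond H lam R) :
    SuperquadraticBeyond (fun x p => H (-x) (-p)) lam R := by
  obtain ⟨hR, c, hc, h⟩ := h
  exact ⟨hR, c, hc, fun x p hp => by simpa using h (-x) (-p) (by simpa using hp)⟩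

theorem IsQuasiconvexHamiltonian.reflect (hH : IsQuasiconvexHamiltonian H phat) :
    IsQuasiconvexHamiltonian (fun x p => H (-x) (-p)) fun x => -phat (-x) where
  continuous := hH.continuous.comp (continuous_neg (G := ℝ × ℝ))
  exists_lipschitzOnWith M := by
    obtain ⟨K, hK⟩ := hH.exists_lipschitzOnWith M
    refine ⟨K, fun x => LipschitzOnWith.of_dist_le_mul fun p hp q hq => ?_⟩
    rw [← dist_neg_neg p q]
    exact (hK (-x)).dist_le_mul _ ⟨neg_le_neg hp.2, neg_le.1 hp.1⟩
      _ ⟨neg_le_neg hq.2, neg_le.1 hq.1⟩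
  exists_superquadraticBeyond lam := (hH.exists_superquadraticBeyond lam).imp fun _ h => h.reflect
  strictAntiOn x _ hp _ hq hpq :=
    hH.strictMonoOn (-x) (le_neg.1 (mem_Iic.1 hq)) (le_neg.1 (mem_Iic.1 hp)) (neg_lt_neg hpq)
  strictMonoOn x _ hp _ hq hpq :=
    hH.strictAntiOn (-x) (neg_le.1 (mem_Ici.1 hq)) (neg_le.1 (mem_Ici.1 hp)) (neg_lt_neg hpq)

theorem IsComponent.reflect (hC : IsComponent a l r) :
    IsComponent (fun x => a (-x)) (-r) (-l) where
  lt := neg_lt_neg hC.lt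
  left_eq_zero := by rw [neg_neg, hC.right_eq_zero]
  right_eq_zero := by rw [neg_neg, hC.left_eq_zero]
  pos x hx := hC.pos (-x) ⟨lt_neg.1 hx.2, neg_lt.1 hx.1⟩

theorem IsSlopeOn.reflect (hf : IsSlopeOn a H lam (Ioo l r) f) :
    IsSlopeOn (fun x => a (-x)) (fun x p => H (-x) (-p)) lam (Ioo (-r) (-l)) fun x => -f (-x) :=
  fun x hx => (((hf (-x) ⟨lt_neg.1 hx.2, neg_lt.1 hx.1⟩).comp x (hasDerivAt_neg x)).neg).congr_deriv
    (by simp)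

theorem IsSlopeOn.neg (hf : IsSlopeOn a H lam s f) :
    IsSlopeOn a (fun x p => -H x (-p)) (-lam) s fun x => -f x :=
  fun x hx => (hf x hx).neg.congr_deriv (by simp only [neg_neg]; ring)

end Reflection

/-! ### Slopes on a component: bounds and endpoint limits -/

section Slope

variable {a : ℝ → ℝ} {H : ℝ → ℝ → ℝ} {phat f : ℝ → ℝ} {lam l r : ℝ} {s t : Set ℝ}

theorem IsSlopeOn.mono (hf : IsSlopeOn a H lam s f) (hts : t ⊆ s) : IsSlopeOn a H lam t f :=
  fun x hx => hf x (hts hx)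

theorem IsSlopeOn.continuousOn (hf : IsSlopeOn a H lam s f) : ContinuousOn f s :=
  fun x hx => (hf x hx).continuousAt.continuousWithinAt

theorem IsSlopeOn.le_of_forall_lt {c d q : ℝ} (hf : IsSlopeOn a H lam (Icc c d) f) (hcd : c ≤ d)
    (ha : ∀ x ∈ Icc c d, 0 < a x) (hq : ∀ x ∈ Icc c d, lam < H x q) (hc : f c ≤ q) : f d ≤ q := by
  refine image_le_of_deriv_right_lt_deriv_boundary hf.continuousOn
    (fun x hx => (hf x (Ico_subset_Icc_self hx)).hasDerivWithinAt)
    (B := fun _ => q) (B' := fun _ => 0) hc (fun x => hasDerivAt_const x q) (fun x hx hfx => ?_)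
    (right_mem_Icc.2 hcd)
  have hx' := Ico_subset_Icc_self hx
  exact div_neg_of_neg_of_pos (by rw [hfx]; linarith [hq x hx']) (ha x hx')

theorem SuperquadraticBeyond.lt {R : ℝ} (hR : SuperquadraticBeyond H lam R) {p : ℝ} (hp : R ≤ |p|)
    (x : ℝ) : lam < H x p := by
  obtain ⟨hR1, c, hc, hcR⟩ := hR
  have hp0 : p ≠ 0 := abs_pos.1 (by linarith)
  have : 0 < c * p ^ 2 := by positivity
  linarith [hcR x p hp]

theorem SuperquadraticBeyond.mono_level {R lam0 : ℝ} (hR : SuperquadraticBeyond H lam R)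
    (hlam : lam0 ≤ lam) : SuperquadraticBeyond H lam0 R := by
  obtain ⟨hR1, c, hc, hcR⟩ := hR
  exact ⟨hR1, c, hc, fun x p hp => (hcR x p hp).trans (by linarith)⟩

/-- Where `f > R`, the function `1 / f` has derivative at least `c / a`, which is not integrable at
the zero `l` of `a`; so `1 / f` would become negative near `l`. -/
theorem IsSlopeOn.le_of_superquadraticBeyond (ha : IsDegenerateDiffusion a) (hC : IsComponent a l r)
    (hf : IsSlopeOn a H lam (Ioo l r) f) {R : ℝ} (hR : SuperquadraticBeyond H lam R) {x : ℝ}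
    (hx : x ∈ Ioo l r) : f x ≤ R := by
  by_contra! hRx
  have hR0 : 0 < R := one_pos.trans_le hR.1
  have hsub : Ioc l x ⊆ Ioo l r := fun y hy => ⟨hy.1, hy.2.trans_lt hx.2⟩
  have hgt : ∀ y ∈ Ioc l x, R < f y := by
    intro y hy
    by_contra! hle
    have hIcc : Icc y x ⊆ Ioo l r := (Icc_subset_Ioc hy.1 le_rfl).trans hsub
    exact hRx.not_ge ((hf.mono hIcc).le_of_forall_lt hy.2 (fun z hz => hC.pos z (hIcc hz))
      (fun z _ => hR.lt (le_abs_self R) z) hle)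
  obtain ⟨-, c, hc, hcR⟩ := hR
  obtain ⟨C, hC0, haC⟩ := ha.exists_le_sq
  have hderiv : ∀ y ∈ Ioo l x,
      HasDerivAt (fun y => (f y)⁻¹) ((H y (f y) - lam) / f y ^ 2 / a y) y := fun y hy =>
    ((hf y (hsub (Ioo_subset_Ioc_self hy))).fun_inv
      (hR0.trans (hgt y (Ioo_subset_Ioc_self hy))).ne').congr_deriv (by ring)
  have hlower : ∀ y ∈ Ioo l x, c / C / (y - l) ^ 2 ≤ (H y (f y) - lam) / f y ^ 2 / a y := by
    intro y hy
    have hRy := hgt y (Ioo_subset_Ioc_self hy)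
    have hcy : c ≤ (H y (f y) - lam) / f y ^ 2 :=
      (le_div_iff₀ (pow_pos (hR0.trans hRy) 2)).2 (hcR y _ (hRy.le.trans (le_abs_self _)))
    rw [div_div]
    exact div_le_div₀ (hc.le.trans hcy) hcy (hC.pos y (hsub (Ioo_subset_Ioc_self hy)))
      (haC y l hC.left_eq_zero)
  have hbot := tendsto_atBot_of_div_sq_le_deriv hx.1 (div_pos hc hC0) hderiv hlower
  obtain ⟨y, hy, hyx⟩ := ((hbot.eventually_lt_atBot 0).and (Ioo_mem_nhdsGT hx.1)).exists
  exact hy.not_gt (inv_pos.2 (hR0.trans (hgt y (Ioo_subset_Ioc_self hyx))))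

theorem IsSlopeOn.mem_Icc_of_superquadraticBeyond (ha : IsDegenerateDiffusion a)
    (hC : IsComponent a l r) (hf : IsSlopeOn a H lam (Ioo l r) f) {R : ℝ}
    (hR : SuperquadraticBeyond H lam R) {x : ℝ} (hx : x ∈ Ioo l r) : f x ∈ Icc (-R) R := by
  refine ⟨?_, hf.le_of_superquadraticBeyond ha hC hR hx⟩
  have := hf.reflect.le_of_superquadraticBeyond ha.reflect hC.reflect hR.reflect (x := -x)
    ⟨neg_lt_neg hx.2, neg_lt_neg hx.1⟩
  rw [neg_neg] at this
  exact neg_le.1 this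

theorem IsSlopeOn.eventually_le_or_ge_of_lt (hH : Continuous fun z : ℝ × ℝ => H z.1 z.2)
    (hC : IsComponent a l r) (hf : IsSlopeOn a H lam (Ioo l r) f) {q : ℝ} (hq : lam < H l q) :
    (∀ᶠ x in 𝓝[>] l, f x ≤ q) ∨ ∀ᶠ x in 𝓝[>] l, q ≤ f x := by
  have hev : ∀ᶠ x in 𝓝[>] l, lam < H x q :=
    ((hH.comp (.prodMk_left q)).tendsto l |>.eventually (lt_mem_nhds hq)).filter_mono
      nhdsWithin_le_nhds
  obtain ⟨d, hld, hd⟩ := mem_nhdsGT_iff_exists_Ioo_subset.1 (inter_mem hev (Ioo_mem_nhdsGT hC.lt))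
  refine or_iff_not_imp_right.2 fun hfreq => ?_
  filter_upwards [Ioo_mem_nhdsGT hld] with x hx
  obtain ⟨y, hfy, hy⟩ := ((not_eventually.1 hfreq).and_eventually (Ioo_mem_nhdsGT hx.1)).exists
  have hsub : Icc y x ⊆ Ioo l d := Icc_subset_Ioo hy.1 hx.2
  exact (hf.mono fun z hz => (hd (hsub hz)).2).le_of_forall_lt hy.2.le
    (fun z hz => hC.pos z (hd (hsub hz)).2) (fun z hz => (hd (hsub hz)).1) (not_le.1 hfy).le

theorem IsSlopeOn.eventually_le_or_ge (hH : Continuous fun z : ℝ × ℝ => H z.1 z.2)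
    (hC : IsComponent a l r) (hf : IsSlopeOn a H lam (Ioo l r) f) {q : ℝ} (hq : H l q ≠ lam) :
    (∀ᶠ x in 𝓝[>] l, f x ≤ q) ∨ ∀ᶠ x in 𝓝[>] l, q ≤ f x := by
  rcases hq.lt_or_gt with hlt | hgt
  · have := hf.neg.eventually_le_or_ge_of_lt (q := -q)
      (hH.comp (continuous_fst.prodMk continuous_snd.neg)).neg hC (by simpa using hlt)
    simpa only [neg_le_neg_iff] using this.symm
  · exact hf.eventually_le_or_ge_of_lt hH hC hgt

theorem IsSlopeOn.le_hamiltonian_of_tendsto (ha : IsDegenerateDiffusion a)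
    (hH : Continuous fun z : ℝ × ℝ => H z.1 z.2) (hC : IsComponent a l r)
    (hf : IsSlopeOn a H lam (Ioo l r) f) {m : ℝ} (hm : Tendsto f (𝓝[>] l) (𝓝 m)) :
    lam ≤ H l m := by
  by_contra! hlt
  obtain ⟨q, hmq, hq⟩ := exists_between hlt
  have hev : ∀ᶠ x in 𝓝[>] l, H x (f x) < q :=
    ((hH.tendsto (l, m)).comp ((tendsto_nhdsWithin_of_tendsto_nhds tendsto_id).prodMk_nhds
      hm)).eventually (gt_mem_nhds hmq)
  obtain ⟨d, hld, hd⟩ := mem_nhdsGT_iff_exists_Ioo_subset.1 (inter_mem hev (Ioo_mem_nhdsGT hC.lt))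
  obtain ⟨C, hC0, haC⟩ := ha.exists_le_sq
  refine not_tendsto_nhds_of_tendsto_atBot (tendsto_atBot_of_div_sq_le_deriv hld
    (div_pos (sub_pos.2 hq) hC0) (fun x hx => hf x (hd hx).2) fun x hx => ?_) m hm
  have hHx : lam - q ≤ lam - H x (f x) := sub_le_sub_left (hd hx).1.le lam
  rw [div_div]
  exact div_le_div₀ ((sub_pos.2 hq).le.trans hHx) hHx (hC.pos x (hd hx).2)
    (haC x l hC.left_eq_zero)

theorem IsSlopeOn.hamiltonian_eq_of_tendsto (ha : IsDegenerateDiffusion a)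
    (hH : Continuous fun z : ℝ × ℝ => H z.1 z.2) (hC : IsComponent a l r)
    (hf : IsSlopeOn a H lam (Ioo l r) f) {m : ℝ} (hm : Tendsto f (𝓝[>] l) (𝓝 m)) :
    H l m = lam := by
  refine le_antisymm ?_ (hf.le_hamiltonian_of_tendsto ha hH hC hm)
  have := hf.neg.le_hamiltonian_of_tendsto ha
    (hH.comp (continuous_fst.prodMk continuous_snd.neg)).neg hC hm.neg
  simpa using this

theorem IsQuasiconvexHamiltonian.dense_setOf_ne (hH : IsQuasiconvexHamiltonian H phat) (x lam : ℝ) :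
    Dense {q | H x q ≠ lam} := by
  have hlevel : ∀ t, InjOn (H x) t → ({q | H x q = lam} ∩ t).Subsingleton :=
    fun t ht p hp q hq => ht hp.2 hq.2 (Eq.trans hp.1 hq.1.symm)
  have hsplit : {q | H x q = lam} =
      {q | H x q = lam} ∩ Iic (phat x) ∪ {q | H x q = lam} ∩ Ici (phat x) := by
    rw [← inter_union_distrib_left, Iic_union_Ici, inter_univ]
  have hcount : {q | H x q = lam}.Countable := by
    rw [hsplit]
    exact (hlevel _ (hH.strictAntiOn x).injOn).finite.countable.union
      (hlevel _ (hH.strictMonoOn x).injOn).finite.countable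
  exact hcount.dense_compl ℝ

theorem IsSlopeOn.exists_tendsto_left (ha : IsDegenerateDiffusion a)
    (hH : IsQuasiconvexHamiltonian H phat) (hC : IsComponent a l r)
    (hf : IsSlopeOn a H lam (Ioo l r) f) : ∃ m, Tendsto f (𝓝[>] l) (𝓝 m) ∧ H l m = lam := by
  obtain ⟨R, hR⟩ := hH.exists_superquadraticBeyond lam
  have hbound : ∀ᶠ x in 𝓝[>] l, f x ∈ Icc (-R) R := by
    filter_upwards [Ioo_mem_nhdsGT hC.lt] with x hx
    exact hf.mem_Icc_of_superquadraticBeyond ha hC hR hx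
  obtain ⟨m, hm⟩ : ∃ m, Tendsto f (𝓝[>] l) (𝓝 m) := by
    refine tendsto_of_no_upcrossings (hH.dense_setOf_ne l lam) ?_
      ⟨R, hbound.mono fun _ h => h.2⟩ ⟨-R, hbound.mono fun _ h => h.1⟩
    rintro q hq b - hqb ⟨hlow, hhigh⟩
    rcases hf.eventually_le_or_ge hH.continuous hC hq with hle | hge
    · exact hhigh (hle.mono fun x hx => (hx.trans hqb.le).not_gt)
    · exact hlow (hge.mono fun x hx => hx.not_gt)
  exact ⟨m, hm, hf.hamiltonian_eq_of_tendsto ha hH.continuous hC hm⟩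

end Slope

/-! ### The upper branch -/

section UpperBranch

variable {a : ℝ → ℝ} {H : ℝ → ℝ → ℝ} {phat f g w : ℝ → ℝ} {lam lam0 l r p c d : ℝ}

theorem IsQuasiconvexHamiltonian.lt_of_hamiltonian_lt (hH : IsQuasiconvexHamiltonian H phat)
    {x p q : ℝ} (hp : phat x ≤ p) (hlt : H x q < H x p) : q < p := by
  by_contra! hpq
  exact hlt.not_ge ((hH.strictMonoOn x).monotoneOn hp (hp.trans hpq) hpq)

theorem IsQuasiconvexHamiltonian.phat_lt_of_hamiltonian_lt (hH : IsQuasiconvexHamiltonian H phat)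
    {x p q : ℝ} (hpq : p ≤ q) (hlt : H x p < H x q) : phat x < q := by
  by_contra! hq
  exact hlt.not_ge ((hH.strictAntiOn x).antitoneOn (hpq.trans hq) hq hpq)

theorem IsQuasiconvexHamiltonian.eventually_phat_lt (hH : IsQuasiconvexHamiltonian H phat)
    {x q : ℝ} (hq : phat x < q) : ∀ᶠ y in 𝓝 x, phat y < q := by
  obtain ⟨p, hp, hpq⟩ := exists_between hq
  have hlt : H x p < H x q := hH.strictMonoOn x hp.le hq.le hpq
  filter_upwards [((hH.continuous.comp (.prodMk_left p)).tendsto x).eventually_lt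
    ((hH.continuous.comp (.prodMk_left q)).tendsto x) hlt] with y hy
  exact hH.phat_lt_of_hamiltonian_lt hpq.le hy

theorem IsQuasiconvexHamiltonian.mul_sub_nonneg (hH : IsQuasiconvexHamiltonian H phat) {x p q : ℝ}
    (hp : phat x ≤ p) (hq : phat x ≤ q) : 0 ≤ (p - q) * (H x p - H x q) := by
  rcases le_total p q with hle | hle
  · exact mul_nonneg_of_nonpos_of_nonpos (sub_nonpos.2 hle)
      (sub_nonpos.2 ((hH.strictMonoOn x).monotoneOn hp hq hle))
  · exact mul_nonneg (sub_nonneg.2 hle)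
      (sub_nonneg.2 ((hH.strictMonoOn x).monotoneOn hq hp hle))

theorem IsSlopeOn.tendsto_left_of_le (ha : IsDegenerateDiffusion a)
    (hH : IsQuasiconvexHamiltonian H phat) (hC : IsComponent a l r)
    (hf : IsSlopeOn a H lam (Ioo l r) f) (hlam : lam0 < lam) (hw : IsSlopeOn a H lam0 (Ioo l r) w)
    (hwf : ∀ x ∈ Ioo l r, w x ≤ f x) (hp : phat l ≤ p) (hHp : H l p = lam) :
    Tendsto f (𝓝[>] l) (𝓝 p) := by
  obtain ⟨m, hm, hHm⟩ := hf.exists_tendsto_left ha hH hC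
  obtain ⟨m₀, hm₀, hHm₀⟩ := hw.exists_tendsto_left ha hH hC
  have hle : m₀ ≤ m := le_of_tendsto_of_tendsto hm₀ hm (by
    filter_upwards [Ioo_mem_nhdsGT hC.lt] with x hx using hwf x hx)
  have hphat : phat l < m := hH.phat_lt_of_hamiltonian_lt hle (by rwa [hHm, hHm₀])
  rwa [(hH.strictMonoOn l).injOn hp hphat.le (hHp.trans hHm.symm)]

theorem IsSlopeOn.exists_tendsto_right (ha : IsDegenerateDiffusion a)
    (hH : IsQuasiconvexHamiltonian H phat) (hC : IsComponent a l r)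
    (hf : IsSlopeOn a H lam (Ioo l r) f) : ∃ m, Tendsto f (𝓝[<] r) (𝓝 m) ∧ H r m = lam := by
  obtain ⟨m, hm, hHm⟩ := hf.reflect.exists_tendsto_left ha.reflect hH.reflect hC.reflect
  refine ⟨-m, ?_, by simpa using hHm⟩
  simpa [Function.comp_def] using (hm.comp tendsto_neg_nhdsLT).neg

theorem IsSlopeOn.tendsto_right_of_le (ha : IsDegenerateDiffusion a)
    (hH : IsQuasiconvexHamiltonian H phat) (hC : IsComponent a l r)
    (hf : IsSlopeOn a H lam (Ioo l r) f) (hlam : lam0 < lam) (hw : IsSlopeOn a H lam0 (Ioo l r) w)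
    (hwf : ∀ x ∈ Ioo l r, w x ≤ f x) (hp : phat r ≤ p) (hHp : H r p = lam) :
    Tendsto f (𝓝[<] r) (𝓝 p) := by
  obtain ⟨m, hm, hHm⟩ := hf.exists_tendsto_right ha hH hC
  obtain ⟨m₀, hm₀, hHm₀⟩ := hw.exists_tendsto_right ha hH hC
  have hle : m₀ ≤ m := le_of_tendsto_of_tendsto hm₀ hm (by
    filter_upwards [Ioo_mem_nhdsLT hC.lt] with x hx using hwf x hx)
  have hphat : phat r < m := hH.phat_lt_of_hamiltonian_lt hle (by rwa [hHm, hHm₀])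
  rwa [(hH.strictMonoOn r).injOn hp hphat.le (hHp.trans hHm.symm)]

/-- On the upper branch `H(x, ·)` increases, so `(f - g) ^ 2` is nonincreasing near `l`, while it
tends to `0` at `l`. -/
theorem IsSlopeOn.eventuallyEq_of_tendsto (hH : IsQuasiconvexHamiltonian H phat)
    (hC : IsComponent a l r) (hf : IsSlopeOn a H lam (Ioo l r) f)
    (hg : IsSlopeOn a H lam (Ioo l r) g) (hp : phat l < p) (hfp : Tendsto f (𝓝[>] l) (𝓝 p))
    (hgp : Tendsto g (𝓝[>] l) (𝓝 p)) : f =ᶠ[𝓝[>] l] g := by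
  obtain ⟨q, hq, hqp⟩ := exists_between hp
  obtain ⟨d, hld, hd⟩ := mem_nhdsGT_iff_exists_Ioo_subset.1 <|
    (hfp.eventually (lt_mem_nhds hqp)).and <| (hgp.eventually (lt_mem_nhds hqp)).and <|
    ((hH.eventually_phat_lt hq).filter_mono nhdsWithin_le_nhds).and (Ioo_mem_nhdsGT hC.lt)
  have hderiv : ∀ x ∈ Ioo l d, HasDerivAt (fun x => (f x - g x) ^ 2)
      (2 * (f x - g x) * ((H x (g x) - H x (f x)) / a x)) x := fun x hx =>
    (((hf x (hd hx).2.2.2).sub (hg x (hd hx).2.2.2)).pow 2).congr_deriv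
      (by simp only [Nat.cast_ofNat, Pi.sub_apply]; ring)
  have hanti : AntitoneOn (fun x => (f x - g x) ^ 2) (Ioo l d) := by
    refine antitoneOn_of_deriv_nonpos (convex_Ioo l d)
      (fun x hx => (hderiv x hx).continuousAt.continuousWithinAt) ?_ ?_ <;> rw [interior_Ioo]
    · exact fun x hx => (hderiv x hx).differentiableAt.differentiableWithinAt
    · intro x hx
      obtain ⟨hqf, hqg, hqx, hxr⟩ := hd hx
      have hmono := hH.mul_sub_nonneg (hqx.trans hqf).le (hqx.trans hqg).le
      have : 0 ≤ 2 * ((f x - g x) * (H x (f x) - H x (g x))) / a x :=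
        div_nonneg (by linarith) (hC.pos x hxr).le
      rw [(hderiv x hx).deriv]
      exact neg_nonneg.1 (this.trans_eq (by ring))
  have hzero : Tendsto (fun x => (f x - g x) ^ 2) (𝓝[>] l) (𝓝 0) := by
    simpa using (hfp.sub hgp).pow 2
  filter_upwards [Ioo_mem_nhdsGT hld] with x hx
  have hle : (f x - g x) ^ 2 ≤ 0 := ge_of_tendsto hzero (by
    filter_upwards [Ioo_mem_nhdsGT hx.1] with y hy
    exact hanti ⟨hy.1, hy.2.trans hx.2⟩ hx hy.2.le)
  exact sub_eq_zero.1 (sq_eq_zero_iff.1 (hle.antisymm (sq_nonneg _)))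


theorem continuousOn_slopeField (hH : Continuous fun z : ℝ × ℝ => H z.1 z.2) (ha : Continuous a)
    {s : Set ℝ} (hs : ∀ x ∈ s, a x ≠ 0) (t : Set ℝ) :
    ContinuousOn (fun z : ℝ × ℝ => (lam - H z.1 z.2) / a z.1) (s ×ˢ t) :=
  (continuous_const.sub hH).continuousOn.div (ha.comp continuous_fst).continuousOn
    fun z hz => hs z.1 hz.1

theorem IsQuasiconvexHamiltonian.exists_lipschitzOnWith_slopeField
    (hH : IsQuasiconvexHamiltonian H phat) (ha : Continuous a) (hpos : ∀ x ∈ Icc c d, 0 < a x)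
    (lam M : ℝ) :
    ∃ K : NNReal, ∀ x ∈ Icc c d, LipschitzOnWith K (fun p => (lam - H x p) / a x) (Icc (-M) M) := by
  obtain ⟨K, hK⟩ := hH.exists_lipschitzOnWith M
  obtain ⟨L, hL⟩ := isCompact_Icc.exists_bound_of_continuousOn
    (ha.continuousOn.inv₀ fun x hx => (hpos x hx).ne')
  refine ⟨K * L.toNNReal, fun x hx => LipschitzOnWith.of_dist_le_mul fun p hp q hq => ?_⟩
  have hHpq := (hK x).dist_le_mul p hp q hq
  calc dist ((lam - H x p) / a x) ((lam - H x q) / a x)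
      = dist (H x p) (H x q) * ‖(a x)⁻¹‖ := by
        rw [Real.dist_eq, Real.dist_eq, Real.norm_eq_abs, ← abs_mul, ← abs_neg]; ring_nf
    _ ≤ K * dist p q * L.toNNReal := mul_le_mul hHpq ((hL x hx).trans (Real.le_coe_toNNReal L))
        (norm_nonneg _) (by positivity)
    _ = (K * L.toNNReal : NNReal) * dist p q := by push_cast; ring

theorem IsSlopeOn.le_of_le (hH : IsQuasiconvexHamiltonian H phat) (ha : Continuous a) (hcd : c ≤ d)
    (hpos : ∀ x ∈ Icc c d, 0 < a x) (hf : IsSlopeOn a H lam (Icc c d) f)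
    (hg : IsSlopeOn a H lam (Icc c d) g) (hc : f c ≤ g c) : f d ≤ g d :=
  le_of_hasDerivWithinAt_of_lipschitzOnWith (v := fun x p => (lam - H x p) / a x)
    (hH.exists_lipschitzOnWith_slopeField ha hpos lam)
    hf.continuousOn (fun x hx => (hf x (Ico_subset_Icc_self hx)).hasDerivWithinAt)
    hg.continuousOn (fun x hx => (hg x (Ico_subset_Icc_self hx)).hasDerivWithinAt)
    hc (right_mem_Icc.2 hcd)

theorem IsSlopeOn.eqOn_of_tendsto (hH : IsQuasiconvexHamiltonian H phat) (ha : Continuous a)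
    (hC : IsComponent a l r) (hf : IsSlopeOn a H lam (Ioo l r) f)
    (hg : IsSlopeOn a H lam (Ioo l r) g) (hp : phat l < p) (hfp : Tendsto f (𝓝[>] l) (𝓝 p))
    (hgp : Tendsto g (𝓝[>] l) (𝓝 p)) : EqOn f g (Ioo l r) := by
  intro x hx
  obtain ⟨y, hyeq, hy⟩ := ((hf.eventuallyEq_of_tendsto hH hC hg hp hfp hgp).and
    (Ioo_mem_nhdsGT hx.1)).exists
  have hsub : Icc y x ⊆ Ioo l r := Icc_subset_Ioo hy.1 hx.2
  have hpos : ∀ z ∈ Icc y x, 0 < a z := fun z hz => hC.pos z (hsub hz)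
  exact le_antisymm ((hf.mono hsub).le_of_le hH ha hy.2.le hpos (hg.mono hsub) hyeq.le)
    ((hg.mono hsub).le_of_le hH ha hy.2.le hpos (hf.mono hsub) hyeq.ge)

end UpperBranch

section Existence

variable {a : ℝ → ℝ} {H : ℝ → ℝ → ℝ} {phat w : ℝ → ℝ} {lam lam0 l r b c d B : ℝ}

theorem IsQuasiconvexHamiltonian.exists_truncated_slope (hH : IsQuasiconvexHamiltonian H phat)
    (ha : Continuous a) (hpos : ∀ x ∈ Icc b d, 0 < a x) (hB : -B ≤ B) (hc : c ∈ Icc b d)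
    (lam y : ℝ) :
    ∃ f : ℝ → ℝ, f c = y ∧ ∀ x ∈ Icc b d,
      HasDerivWithinAt f ((lam - H x (projIcc (-B) B hB (f x))) / a x) (Icc b d) x := by
  have hfield := continuousOn_slopeField (lam := lam) hH.continuous ha
    (fun x hx => (hpos x hx).ne') (Icc (-B) B)
  obtain ⟨K, hK⟩ := hH.exists_lipschitzOnWith_slopeField ha hpos lam B
  obtain ⟨L, hL⟩ := (isCompact_Icc.prod isCompact_Icc).exists_bound_of_continuousOn hfield
  refine exists_hasDerivWithinAt_of_lipschitzWith (K := K) (L := L.toNNReal)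
    (v := fun x p => (lam - H x (projIcc (-B) B hB p)) / a x) (fun x hx => ?_) (fun p => ?_)
    (fun x hx p => ?_) hc y
  · exact mul_one K ▸ (hK x hx).to_restrict.comp (LipschitzWith.projIcc hB)
  · exact hfield.comp (continuousOn_id.prodMk continuousOn_const)
      fun x hx => ⟨hx, (projIcc (-B) B hB p).2⟩
  · exact (hL (x, projIcc (-B) B hB p) ⟨hx, (projIcc (-B) B hB p).2⟩).trans
      (Real.le_coe_toNNReal L)

/-- The constant `B` is an upper barrier, and `w`, a slope at a lower level, a strict lower one. -/
theorem IsSlopeOn.exists_barrier_between (hH : IsQuasiconvexHamiltonian H phat) (ha : Continuous a)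
    (hbc : b < c) (hcd : c < d) (hpos : ∀ x ∈ Icc b d, 0 < a x) (hlam : lam0 < lam)
    (hw : IsSlopeOn a H lam0 (Icc b d) w) (hwB : ∀ x ∈ Icc b d, w x ∈ Icc (-B) B)
    (hB : ∀ x, lam < H x B) :
    ∃ f, IsSlopeOn a H lam (Ico c d) f ∧ f c = B ∧ ∀ x ∈ Ico c d, f x ∈ Icc (w x) B := by
  have hc : c ∈ Icc b d := ⟨hbc.le, hcd.le⟩
  have hBB : -B ≤ B := (hwB c hc).1.trans (hwB c hc).2
  obtain ⟨f, hfc, hf⟩ := hH.exists_truncated_slope ha hpos hBB hc lam B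
  have hderiv : ∀ x ∈ Ico c d,
      HasDerivAt f ((lam - H x (projIcc (-B) B hBB (f x))) / a x) x := fun x hx =>
    (hf x ⟨hbc.le.trans hx.1, hx.2.le⟩).hasDerivAt (Icc_mem_nhds (hbc.trans_le hx.1) hx.2)
  have hsub : Icc c d ⊆ Icc b d := Icc_subset_Icc_left hbc.le
  have hcont : ContinuousOn f (Icc c d) :=
    ContinuousOn.mono (fun x hx => (hf x hx).continuousWithinAt) hsub
  have hfB : ∀ x ∈ Icc c d, f x ≤ B := fun x hx =>
    image_le_of_deriv_right_lt_deriv_boundary hcont (fun y hy => (hderiv y hy).hasDerivWithinAt)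
      (B := fun _ => B) (B' := fun _ => 0) hfc.le (fun y => hasDerivAt_const y B)
      (fun y hy hyB => div_neg_of_neg_of_pos
        (by rw [hyB, projIcc_right]; exact sub_neg.2 (hB y))
        (hpos y (hsub (Ico_subset_Icc_self hy)))) hx
  have hwf : ∀ x ∈ Icc c d, w x ≤ f x := fun x hx =>
    image_le_of_deriv_right_lt_deriv_boundary' (hw.mono hsub).continuousOn
      (fun y hy => (hw y (hsub (Ico_subset_Icc_self hy))).hasDerivWithinAt)
      ((hwB c hc).2.trans_eq hfc.symm) hcont (fun y hy => (hderiv y hy).hasDerivWithinAt)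
      (fun y hy hyw => by
        have hy' := hsub (Ico_subset_Icc_self hy)
        rw [← hyw, projIcc_of_mem hBB (hwB y hy')]
        exact div_lt_div_of_pos_right (by linarith) (hpos y hy')) hx
  refine ⟨f, fun x hx => (hderiv x hx).congr_deriv ?_, hfc, fun x hx =>
    ⟨hwf x (Ico_subset_Icc_self hx), hfB x (Ico_subset_Icc_self hx)⟩⟩
  have hx' := Ico_subset_Icc_self hx
  rw [projIcc_of_mem hBB ⟨(hwB x (hsub hx')).1.trans (hwf x hx'), hfB x hx'⟩]

theorem IsSlopeOn.iInf {F : ℕ → ℝ → ℝ} (hH : Continuous fun z : ℝ × ℝ => H z.1 z.2)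
    (ha : Continuous a) (hpos : ∀ x ∈ Ioo l r, 0 < a x) (hanti : Antitone F)
    (hB : ∀ n, ∀ x ∈ Ioo l r, F n x ∈ Icc (-B) B)
    (hF : ∀ c d, l < c → d < r → ∀ᶠ n in atTop, IsSlopeOn a H lam (Icc c d) (F n)) :
    IsSlopeOn a H lam (Ioo l r) fun x => ⨅ n, F n x := by
  intro x hx
  obtain ⟨c, hlc, hcx⟩ := exists_between hx.1
  obtain ⟨d, hxd, hdr⟩ := exists_between hx.2
  obtain ⟨N, hN⟩ := eventually_atTop.1 (hF c d hlc hdr)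
  have hsub : Icc c d ⊆ Ioo l r := Icc_subset_Ioo hlc hdr
  have hlim : ∀ y ∈ Icc c d, Tendsto (fun n => F n y) atTop (𝓝 (⨅ n, F n y)) := fun y hy =>
    tendsto_atTop_ciInf (fun _ _ hmn => hanti hmn y)
      ⟨-B, forall_mem_range.2 fun n => (hB n y (hsub hy)).1⟩
  exact hasDerivAt_of_tendsto_of_hasDerivAt (v := fun x p => (lam - H x p) / a x)
    (F := fun n => F (n + N)) (f := fun y => ⨅ n, F n y)
    (continuousOn_slopeField hH ha
      (fun y hy => (hpos y (hsub hy)).ne') (Icc (-B) B))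
    (fun n => hN (n + N) (Nat.le_add_left N n)) (fun n y hy => hB (n + N) y (hsub hy))
    (fun y hy => (tendsto_add_atTop_iff_nat N).2 (hlim y hy)) ⟨hcx, hxd⟩

open Classical in
theorem IsQuasiconvexHamiltonian.antitone_piecewise (hH : IsQuasiconvexHamiltonian H phat)
    (ha : Continuous a) (hpos : ∀ x ∈ Ioo l r, 0 < a x) {u v : ℕ → ℝ} (hu : Antitone u)
    (hv : Monotone v) (hlu : ∀ n, l < u n) (hvr : ∀ n, v n < r) {F : ℕ → ℝ → ℝ}
    (hF : ∀ n, IsSlopeOn a H lam (Ico (u n) (v n)) (F n)) (hFu : ∀ n, F n (u n) = B)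
    (hFB : ∀ n, ∀ x ∈ Ico (u n) (v n), F n x ≤ B) :
    Antitone fun n => (Ico (u n) (v n)).piecewise (F n) fun _ => B := by
  refine antitone_nat_of_succ_le fun n x => ?_
  by_cases hx : x ∈ Ico (u n) (v n)
  · have hsub : Ico (u n) (v n) ⊆ Ico (u (n + 1)) (v (n + 1)) :=
      Ico_subset_Ico (hu n.le_succ) (hv n.le_succ)
    have hIcc : Icc (u n) x ⊆ Ico (u n) (v n) := Icc_subset_Ico_right hx.2
    rw [piecewise_eq_of_mem _ _ _ hx, piecewise_eq_of_mem _ _ _ (hsub hx)]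
    refine ((hF (n + 1)).mono (hIcc.trans hsub)).le_of_le hH ha hx.1
      (fun y hy => hpos y ⟨(hlu n).trans_le hy.1, (hIcc hy).2.trans (hvr n)⟩)
      ((hF n).mono hIcc) ?_
    rw [hFu n]
    exact hFB (n + 1) (u n) (hsub ⟨le_rfl, hx.1.trans_lt hx.2⟩)
  · rw [piecewise_eq_of_notMem _ _ _ hx]
    by_cases hx' : x ∈ Ico (u (n + 1)) (v (n + 1))
    · exact (piecewise_eq_of_mem _ (F (n + 1)) _ hx').trans_le (hFB (n + 1) x hx')
    · exact (piecewise_eq_of_notMem _ _ _ hx').le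

open Classical in
theorem IsSlopeOn.exists_antitone_approx (hH : IsQuasiconvexHamiltonian H phat)
    (ha : Continuous a) (hC : IsComponent a l r) (hlam : lam0 < lam)
    (hw : IsSlopeOn a H lam0 (Ioo l r) w) (hwB : ∀ x ∈ Ioo l r, w x ∈ Icc (-B) B)
    (hB : ∀ x, lam < H x B) :
    ∃ G : ℕ → ℝ → ℝ, Antitone G ∧ (∀ n, ∀ x ∈ Ioo l r, G n x ∈ Icc (w x) B) ∧
      ∀ c d, l < c → d < r → ∀ᶠ n in atTop, IsSlopeOn a H lam (Icc c d) (G n) := by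
  obtain ⟨m, hlm, hmr⟩ := exists_between hC.lt
  obtain ⟨u, hu, hu_mem, hu_lim⟩ := exists_seq_strictAnti_tendsto' hlm
  obtain ⟨v, hv, hv_mem, hv_lim⟩ := exists_seq_strictMono_tendsto' hmr
  have hstep : ∀ n, ∃ f, IsSlopeOn a H lam (Ico (u n) (v n)) f ∧ f (u n) = B ∧
      ∀ x ∈ Ico (u n) (v n), f x ∈ Icc (w x) B := fun n => by
    obtain ⟨b, hlb, hbu⟩ := exists_between (hu_mem n).1
    have hsub : Icc b (v n) ⊆ Ioo l r := Icc_subset_Ioo hlb (hv_mem n).2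
    exact IsSlopeOn.exists_barrier_between hH ha hbu ((hu_mem n).2.trans (hv_mem n).1)
      (fun x hx => hC.pos x (hsub hx)) hlam (hw.mono hsub) (fun x hx => hwB x (hsub hx)) hB
  choose F hF hFu hFw using hstep
  refine ⟨fun n => (Ico (u n) (v n)).piecewise (F n) fun _ => B,
    hH.antitone_piecewise ha hC.pos hu.antitone hv.monotone (fun n => (hu_mem n).1)
      (fun n => (hv_mem n).2) hF hFu fun n x hx => (hFw n x hx).2, fun n x hx => ?_,
    fun c d hlc hdr => ?_⟩
  · by_cases hxn : x ∈ Ico (u n) (v n)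
    · simpa only [piecewise_eq_of_mem _ _ _ hxn] using hFw n x hxn
    · simpa only [piecewise_eq_of_notMem _ _ _ hxn] using ⟨(hwB x hx).2, le_rfl⟩
  · filter_upwards [hu_lim.eventually_lt_const hlc, hv_lim.eventually_const_lt hdr]
      with n hun hvn x hx
    have hnhds : Ico (u n) (v n) ∈ 𝓝 x := Ico_mem_nhds (hun.trans_le hx.1) (hx.2.trans_lt hvn)
    have hxn := mem_of_mem_nhds hnhds
    rw [piecewise_eq_of_mem _ _ _ hxn]
    refine (hF n x hxn).congr_of_eventuallyEq ?_
    filter_upwards [hnhds] with y hy using piecewise_eq_of_mem _ _ _ hy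

theorem IsSlopeOn.exists_ge (ha : IsDegenerateDiffusion a) (hH : IsQuasiconvexHamiltonian H phat)
    (hC : IsComponent a l r) (hlam : lam0 < lam) (hw : IsSlopeOn a H lam0 (Ioo l r) w) :
    ∃ f, IsSlopeOn a H lam (Ioo l r) f ∧ ∀ x ∈ Ioo l r, w x ≤ f x := by
  obtain ⟨B, hB⟩ := hH.exists_superquadraticBeyond lam
  have hwB : ∀ x ∈ Ioo l r, w x ∈ Icc (-B) B := fun x hx =>
    hw.mem_Icc_of_superquadraticBeyond ha hC (hB.mono_level hlam.le) hx
  obtain ⟨G, hanti, hGw, hG⟩ := hw.exists_antitone_approx hH ha.continuous hC hlam hwB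
    fun x => hB.lt (le_abs_self B) x
  exact ⟨fun x => ⨅ n, G n x, IsSlopeOn.iInf hH.continuous ha.continuous hC.pos hanti
    (fun n x hx => ⟨(hwB x hx).1.trans (hGw n x hx).1, (hGw n x hx).2⟩) hG,
    fun x hx => le_ciInf fun n => (hGw n x hx).1⟩

end Existence

/-! ### Touching parabolas and semiconcavity -/

theorem concaveOn_Icc_of_forall_not_isLocalMin {v : ℝ → ℝ} {c d : ℝ}
    (hv : ContinuousOn v (Icc c d))
    (h : ∀ p K : ℝ, 0 < K → ∀ x ∈ Ioo c d, ¬IsLocalMin (fun y => v y - (p * y + K * y ^ 2)) x) :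
    ConcaveOn ℝ (Icc c d) v := by
  refine LinearOrder.concaveOn_of_lt (convex_Icc c d) fun x hx y hy hxy s t hs ht hst => ?_
  simp only [smul_eq_mul]
  by_contra! hlt
  set z := s * x + t * y with hz
  have hzx : z - x = t * (y - x) := by rw [hz, eq_sub_of_add_eq hst]; ring
  have hyz : y - z = s * (y - x) := by rw [hz, eq_sub_of_add_eq' hst]; ring
  have hxy' : 0 < y - x := sub_pos.2 hxy
  have hxz : x < z := sub_pos.1 (hzx ▸ mul_pos ht hxy')
  have hzy : z < y := sub_pos.1 (hyz ▸ mul_pos hs hxy')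
  set m := (v y - v x) / (y - x)
  have hm : m * (y - x) = v y - v x := div_mul_cancel₀ _ hxy'.ne'
  obtain ⟨K, hK, hKlt⟩ : ∃ K > 0, K * ((z - x) * (y - z)) < s * v x + t * v y - v z := by
    have hprod : 0 < (z - x) * (y - z) := mul_pos (sub_pos.2 hxz) (sub_pos.2 hzy)
    obtain ⟨K, hK, hKlt⟩ := exists_between (div_pos (sub_pos.2 hlt) hprod)
    exact ⟨K, hK, (lt_div_iff₀ hprod).1 hKlt⟩
  -- up to a constant, `v - (chord + K (· - x) (· - y))` vanishes at `x`, `y`; it is negative at `z`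
  set g : ℝ → ℝ := fun y' => v y' - ((m - K * (x + y)) * y' + K * y' ^ 2)
  have hg : ∀ y', g y' - g x = v y' - v x - m * (y' - x) + K * ((y' - x) * (y - y')) := fun y' => by
    simp only [g]; ring
  have hgz : g z < g x := by
    have hmz : m * (z - x) = t * (v y - v x) := by rw [hzx, ← hm]; ring
    have hsx : s * v x = v x - t * v x := by rw [eq_sub_of_add_eq hst]; ring
    linarith [hg z]
  have hgy : g y = g x := by linarith [hg y]
  have hsub : Icc x y ⊆ Icc c d := Icc_subset_Icc hx.1 hy.2
  obtain ⟨w, hw, hmin⟩ := isCompact_Icc.exists_isLocalMin_mem_open (f := g) (s := Ioo x y)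
    Ioo_subset_Icc_self ((hv.mono hsub).sub (by fun_prop)) ⟨hxz.le, hzy.le⟩
    (by rw [Icc_sdiff_Ioo_same hxy.le]; rintro w (rfl | rfl) <;> [exact hgz; exact hgy ▸ hgz])
    isOpen_Ioo
  exact h _ K hK w (Ioo_subset_Ioo hx.1 hy.2 hw) hmin

theorem contDiff_affine_add_sq (p K : ℝ) : ContDiff ℝ 2 fun y : ℝ => p * y + K * y ^ 2 := by
  fun_prop

theorem hasDerivAt_affine_add_sq (p K x : ℝ) :
    HasDerivAt (fun y : ℝ => p * y + K * y ^ 2) (p + 2 * K * x) x :=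
  (((hasDerivAt_id x).const_mul p).add (((hasDerivAt_id x).pow 2).const_mul K)).congr_deriv
    (by simp; ring)

theorem deriv_deriv_add_affine_add_sq {W : ℝ → ℝ} (hW : ContDiff ℝ 2 W) (p K x : ℝ) :
    deriv (deriv fun y => W y + (p * y + K * y ^ 2)) x = deriv (deriv W) x + 2 * K := by
  have hderiv : deriv (fun y => W y + (p * y + K * y ^ 2)) =
      fun y => deriv W y + (p + 2 * K * y) := funext fun y =>
    ((hW.differentiable two_ne_zero y).hasDerivAt.add (hasDerivAt_affine_add_sq p K y)).deriv
  have hW' : Differentiable ℝ (deriv W) := hW.differentiable_deriv_two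
  rw [hderiv]
  exact ((hW' x).hasDerivAt.add (((hasDerivAt_id x).const_mul (2 * K)).const_add p)).deriv.trans
    (by ring)

theorem abs_deriv_le_of_isLocalMin_sub {u φ : ℝ → ℝ} {s : Set ℝ} {K : NNReal} {x : ℝ}
    (hu : LipschitzOnWith K u s) (hs : s ∈ 𝓝 x) (hφ : DifferentiableAt ℝ φ x)
    (hmin : IsLocalMin (fun y => u y - φ y) x) : |deriv φ x| ≤ K := by
  have hle : ∀ᶠ y in 𝓝 x, φ y - φ x ≤ K * |y - x| := by
    filter_upwards [hmin, hs] with y hy hys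
    have := (le_abs_self _).trans (hu.dist_le_mul y hys x (mem_of_mem_nhds hs))
    rw [Real.dist_eq] at this
    linarith
  have hslope := hasDerivAt_iff_tendsto_slope_left_right.1 hφ.hasDerivAt
  refine abs_le.2 ⟨ge_of_tendsto hslope.1 ?_, le_of_tendsto hslope.2 ?_⟩
  · filter_upwards [self_mem_nhdsWithin, hle.filter_mono nhdsWithin_le_nhds] with y hyx hy
    rw [slope_def_field, le_div_iff_of_neg (sub_neg.2 hyx)]
    rw [abs_of_neg (sub_neg.2 hyx)] at hy
    linarith
  · filter_upwards [self_mem_nhdsWithin, hle.filter_mono nhdsWithin_le_nhds] with y hyx hy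
    rw [slope_def_field, div_le_iff₀ (sub_pos.2 hyx)]
    rwa [abs_of_pos (sub_pos.2 hyx)] at hy

section SemiconvexSemiconcave

variable {f q : ℝ → ℝ} {s : Set ℝ}

theorem differentiableAt_of_convexOn_add_of_concaveOn_sub {x : ℝ}
    (hconv : ConvexOn ℝ s fun y => f y + q y) (hconc : ConcaveOn ℝ s fun y => f y - q y)
    (hq : DifferentiableAt ℝ q x) (hx : x ∈ interior s) : DifferentiableAt ℝ f x := by
  have hconv' : ConvexOn ℝ s fun y => q y - f y := by
    simpa only [Pi.neg_def, neg_sub] using hconc.neg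
  have hright := hconv.hasDerivWithinAt_rightDeriv_of_mem_interior hx
  have hleft := hconv.hasDerivWithinAt_leftDeriv_of_mem_interior hx
  have hright' := hconv'.hasDerivWithinAt_rightDeriv_of_mem_interior hx
  have hleft' := hconv'.hasDerivWithinAt_leftDeriv_of_mem_interior hx
  have hle := hconv.leftDeriv_le_rightDeriv_of_mem_interior hx
  have hle' := hconv'.leftDeriv_le_rightDeriv_of_mem_interior hx
  set R := derivWithin (fun y => f y + q y) (Ioi x) x
  set L := derivWithin (fun y => f y + q y) (Iio x) x
  have hsum : (fun y => f y + q y + (q y - f y)) = fun y => 2 * q y := by ext; ring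
  have hRq := (uniqueDiffWithinAt_Ioi x).eq_deriv _ (hsum ▸ hright.fun_add hright')
    (hq.hasDerivAt.const_mul 2).hasDerivWithinAt
  have hLq := (uniqueDiffWithinAt_Iio x).eq_deriv _ (hsum ▸ hleft.fun_add hleft')
    (hq.hasDerivAt.const_mul 2).hasDerivWithinAt
  have hRL : R = L := by linarith
  have hsub : HasDerivAt (fun y => f y + q y) L x :=
    hasDerivAt_iff_tendsto_slope_left_right.2
      ⟨(hasDerivWithinAt_iff_tendsto_slope' self_notMem_Iio).1 hleft,
        (hasDerivWithinAt_iff_tendsto_slope' self_notMem_Ioi).1 (hRL ▸ hright)⟩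
  simpa using hsub.differentiableAt.fun_sub hq

theorem continuousOn_deriv_of_convexOn_add_of_concaveOn_sub (hs : IsOpen s)
    (hconv : ConvexOn ℝ s fun y => f y + q y) (hconc : ConcaveOn ℝ s fun y => f y - q y)
    (hq : DifferentiableOn ℝ q s) (hq' : ContinuousOn (deriv q) s) : ContinuousOn (deriv f) s := by
  have hqd : ∀ x ∈ s, DifferentiableAt ℝ q x := fun x hx =>
    (hq x hx).differentiableAt (hs.mem_nhds hx)
  have hfd : ∀ x ∈ s, DifferentiableAt ℝ f x := fun x hx =>
    differentiableAt_of_convexOn_add_of_concaveOn_sub hconv hconc (hqd x hx)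
      (hs.interior_eq.symm ▸ hx)
  have hmono := hconv.monotoneOn_deriv fun x hx => (hfd x hx).fun_add (hqd x hx)
  have hanti := hconc.antitoneOn_deriv fun x hx => (hfd x hx).fun_sub (hqd x hx)
  have hle : ∀ x ∈ s, ∀ y ∈ s, x ≤ y → |deriv f y - deriv f x| ≤ |deriv q y - deriv q x| := by
    intro x hx y hy hxy
    have h₁ := hmono hx hy hxy
    have h₂ := hanti hx hy hxy
    simp only [deriv_fun_add (hfd _ hx) (hqd _ hx), deriv_fun_add (hfd _ hy) (hqd _ hy)] at h₁
    simp only [deriv_fun_sub (hfd _ hx) (hqd _ hx), deriv_fun_sub (hfd _ hy) (hqd _ hy)] at h₂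
    exact (abs_le.2 ⟨by linarith, by linarith⟩).trans (le_abs_self _)
  intro x hx
  refine tendsto_iff_dist_tendsto_zero.2 (squeeze_zero' (Eventually.of_forall fun _ => dist_nonneg)
    ?_ (tendsto_iff_dist_tendsto_zero.1 (hq' x hx)))
  filter_upwards [self_mem_nhdsWithin] with y hy
  rcases le_total x y with hxy | hxy
  · exact hle x hx y hy hxy
  · rw [dist_comm, dist_comm (deriv q y)]
    exact hle y hy x hx hxy

end SemiconvexSemiconcave

/-! ### Regularity of viscosity solutions where `a` is positive -/

section Regularity

variable {a : ℝ → ℝ} {H : ℝ → ℝ → ℝ} {phat u : ℝ → ℝ} {lam c d l r : ℝ} {U V : Set ℝ}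

theorem ViscSuperOn.mono (hu : ViscSuperOn a H lam U u) (hVU : V ⊆ U) : ViscSuperOn a H lam V u :=
  fun φ hφ x hx => hu φ hφ x (hVU hx)

theorem ViscSubOn.neg (hu : ViscSubOn a H lam U u) :
    ViscSuperOn a (fun x p => -H x (-p)) (-lam) U fun x => -u x := by
  intro φ hφ x hx hmin
  have h := hu (fun y => -φ y) hφ.neg x hx (by
    simpa only [Pi.neg_def, neg_sub_left, neg_neg, sub_neg_eq_add, add_comm] using hmin.neg)
  simp only [deriv.fun_neg', deriv.fun_neg] at h
  linarith

theorem ViscSolOn.mono (hu : ViscSolOn a H lam U u) (hVU : V ⊆ U) : ViscSolOn a H lam V u :=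
  ⟨fun φ hφ x hx => hu.1 φ hφ x (hVU hx), hu.2.mono hVU⟩

theorem ViscSuperOn.concaveOn_sub {W : ℝ → ℝ} (hpos : ∀ x ∈ Ioo c d, 0 < a x)
    (hu : ViscSuperOn a H lam (Ioo c d) u) (huc : ContinuousOn u (Icc c d)) (hW : ContDiff ℝ 2 W)
    (hle : ∀ x ∈ Ioo c d, ∀ φ : ℝ → ℝ, ContDiff ℝ 2 φ → IsLocalMin (fun y => u y - φ y) x →
      lam ≤ a x * deriv (deriv W) x + H x (deriv φ x)) :
    ConcaveOn ℝ (Icc c d) fun x => u x - W x := by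
  refine concaveOn_Icc_of_forall_not_isLocalMin (huc.sub hW.continuous.continuousOn)
    fun p K hK x hx hmin => ?_
  simp only [sub_sub] at hmin
  have hφ : ContDiff ℝ 2 fun y => W y + (p * y + K * y ^ 2) := hW.add (contDiff_affine_add_sq p K)
  have hsuper := hu _ hφ x hx hmin
  rw [deriv_deriv_add_affine_add_sq hW] at hsuper
  nlinarith [hle x hx _ hφ hmin, mul_pos (hpos x hx) hK]

theorem ViscSuperOn.exists_concaveOn_sub_sq (ha : Continuous a) (hpos : ∀ x ∈ Icc c d, 0 < a x)
    (hu : ViscSuperOn a H lam (Ioo c d) u) (huc : ContinuousOn u (Icc c d)) {L : ℝ}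
    (hL : ∀ x ∈ Ioo c d, ∀ φ : ℝ → ℝ, ContDiff ℝ 2 φ → IsLocalMin (fun y => u y - φ y) x →
      lam - H x (deriv φ x) ≤ L) :
    ∃ C₀, ∀ C ≥ C₀, ConcaveOn ℝ (Icc c d) fun x => u x - C * x ^ 2 := by
  obtain ⟨A, hA⟩ := isCompact_Icc.exists_bound_of_continuousOn
    (ha.continuousOn.inv₀ fun x hx => (hpos x hx).ne')
  refine ⟨|L| * A, fun C hC => hu.concaveOn_sub (fun x hx => hpos x (Ioo_subset_Icc_self hx)) huc
    (by fun_prop) fun x hx φ hφ hmin => ?_⟩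
  have hax := hpos x (Ioo_subset_Icc_self hx)
  have hAx : 1 ≤ a x * A := by
    rw [← inv_le_iff_one_le_mul₀' hax]
    exact (le_abs_self _).trans (hA x (Ioo_subset_Icc_self hx))
  have hCx : |L| ≤ a x * C := by
    calc |L| ≤ |L| * (a x * A) := le_mul_of_one_le_right (abs_nonneg L) hAx
      _ = a x * (|L| * A) := by ring
      _ ≤ a x * C := by gcongr
  have hderiv : deriv (deriv fun y : ℝ => C * y ^ 2) x = 2 * C := by
    simpa using deriv_deriv_add_affine_add_sq (contDiff_const (c := (0 : ℝ))) 0 C x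
  rw [hderiv]
  linarith [hL x hx φ hφ hmin, le_abs_self L, abs_nonneg L]

theorem IsQuasiconvexHamiltonian.exists_forall_le (hH : IsQuasiconvexHamiltonian H phat)
    (c d : ℝ) : ∃ m, ∀ x ∈ Icc c d, ∀ p, m ≤ H x p := by
  obtain ⟨R, hR⟩ := hH.exists_superquadraticBeyond 0
  obtain ⟨B, hB⟩ := (isCompact_Icc.prod isCompact_Icc).exists_bound_of_continuousOn
    (hH.continuous.continuousOn (s := Icc c d ×ˢ Icc (-R) R))
  refine ⟨min 0 (-B), fun x hx p => ?_⟩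
  rcases le_total R |p| with hp | hp
  · exact (min_le_left _ _).trans (hR.lt hp x).le
  · exact (min_le_right _ _).trans (neg_le_of_abs_le (hB (x, p) ⟨hx, abs_le.1 hp⟩))

theorem ViscSuperOn.exists_concaveOn_sub_sq_of_isQuasiconvexHamiltonian
    (hH : IsQuasiconvexHamiltonian H phat) (ha : Continuous a) (hpos : ∀ x ∈ Icc c d, 0 < a x)
    (hu : ViscSuperOn a H lam (Ioo c d) u) (huc : ContinuousOn u (Icc c d)) :
    ∃ C₀, ∀ C ≥ C₀, ConcaveOn ℝ (Icc c d) fun x => u x - C * x ^ 2 := by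
  obtain ⟨m, hm⟩ := hH.exists_forall_le c d
  exact hu.exists_concaveOn_sub_sq ha hpos huc (L := lam - m) fun x hx φ _ _ =>
    sub_le_sub_left (hm x (Ioo_subset_Icc_self hx) _) lam

theorem ViscSuperOn.locallyLipschitzOn (hH : IsQuasiconvexHamiltonian H phat) (ha : Continuous a)
    (hpos : ∀ x ∈ Icc c d, 0 < a x) (hu : ViscSuperOn a H lam (Ioo c d) u)
    (huc : ContinuousOn u (Icc c d)) : LocallyLipschitzOn (Ioo c d) u := by
  obtain ⟨C, hC⟩ := hu.exists_concaveOn_sub_sq_of_isQuasiconvexHamiltonian hH ha hpos huc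
  have hconc := ((hC C le_rfl).subset Ioo_subset_Icc_self (convex_Ioo c d)).locallyLipschitzOn
    isOpen_Ioo
  have hsq : ContDiff ℝ 1 fun x : ℝ => C * x ^ 2 := by fun_prop
  simpa using! hconc.add hsq.locallyLipschitz.locallyLipschitzOn

theorem ViscSubOn.exists_convexOn_add_sq (hH : Continuous fun z : ℝ × ℝ => H z.1 z.2)
    (ha : Continuous a) (hpos : ∀ x ∈ Icc c d, 0 < a x) (hu : ViscSubOn a H lam (Ioo c d) u)
    {K : NNReal} (huK : LipschitzOnWith K u (Icc c d)) :
    ∃ C₀, ∀ C ≥ C₀, ConvexOn ℝ (Icc c d) fun x => u x + C * x ^ 2 := by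
  obtain ⟨B, hB⟩ := (isCompact_Icc.prod isCompact_Icc).exists_bound_of_continuousOn
    (hH.continuousOn (s := Icc c d ×ˢ Icc (-K : ℝ) K))
  obtain ⟨C₀, hC₀⟩ := hu.neg.exists_concaveOn_sub_sq ha hpos huK.continuousOn.neg (L := -lam + B)
    fun x hx φ hφ hmin => by
      have hslope := abs_deriv_le_of_isLocalMin_sub huK.neg (Icc_mem_nhds hx.1 hx.2)
        (hφ.differentiable two_ne_zero x) hmin
      have := hB (x, -deriv φ x) ⟨Ioo_subset_Icc_self hx, abs_le.1 (by rwa [abs_neg])⟩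
      linarith [(le_abs_self _).trans this]
  refine ⟨C₀, fun C hC => ?_⟩
  simpa [Pi.neg_def, add_comm] using (hC₀ C hC).neg

theorem ViscSolOn.differentiableOn_and_continuousOn_deriv (hH : IsQuasiconvexHamiltonian H phat)
    (ha : Continuous a) (hpos : ∀ x ∈ Icc c d, 0 < a x) (hu : ViscSolOn a H lam (Ioo c d) u)
    {K : NNReal} (huK : LipschitzOnWith K u (Icc c d)) :
    DifferentiableOn ℝ u (Ioo c d) ∧ ContinuousOn (deriv u) (Ioo c d) := by
  obtain ⟨C₁, hC₁⟩ := hu.2.exists_concaveOn_sub_sq_of_isQuasiconvexHamiltonian hH ha hpos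
    huK.continuousOn
  obtain ⟨C₂, hC₂⟩ := hu.1.exists_convexOn_add_sq hH.continuous ha hpos huK
  have hconc := (hC₁ (max C₁ C₂) (le_max_left _ _)).subset Ioo_subset_Icc_self (convex_Ioo c d)
  have hconv := (hC₂ (max C₁ C₂) (le_max_right _ _)).subset Ioo_subset_Icc_self (convex_Ioo c d)
  have hsq : ContDiff ℝ 1 fun x : ℝ => max C₁ C₂ * x ^ 2 := by fun_prop
  refine ⟨fun x hx => ?_, continuousOn_deriv_of_convexOn_add_of_concaveOn_sub isOpen_Ioo hconv hconc
    (hsq.differentiable one_ne_zero).differentiableOn (hsq.continuous_deriv le_rfl).continuousOn⟩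
  exact (differentiableAt_of_convexOn_add_of_concaveOn_sub hconv hconc
    (hsq.differentiable one_ne_zero x) (by rwa [interior_Ioo])).differentiableWithinAt

theorem exists_contDiff_two_deriv_deriv_eqOn {g : ℝ → ℝ} (hcd : c ≤ d)
    (hg : ContinuousOn g (Icc c d)) :
    ∃ W : ℝ → ℝ, ContDiff ℝ 2 W ∧ EqOn (deriv (deriv W)) g (Icc c d) := by
  have hprim {f : ℝ → ℝ} (hf : Continuous f) (x : ℝ) :
      HasDerivAt (fun y => ∫ t in c..y, f t) (f x) x :=
    (hf.integral_hasStrictDerivAt c x).hasDerivAt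
  have hderiv {f : ℝ → ℝ} (hf : Continuous f) : deriv (fun y => ∫ t in c..y, f t) = f :=
    funext fun x => (hprim hf x).deriv
  set G := IccExtend hcd ((Icc c d).domRestrict g)
  have hG : Continuous G := hg.domRestrict.Icc_extend'
  have hG₁ : Continuous fun y => ∫ t in c..y, G t :=
    continuous_iff_continuousAt.2 fun x => (hprim hG x).continuousAt
  refine ⟨fun y => ∫ t in c..y, ∫ s in c..t, G s, ?_, fun x hx => ?_⟩
  · rw [show (2 : WithTop ℕ∞) = 1 + 1 by norm_num, contDiff_succ_iff_deriv, hderiv hG₁,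
      contDiff_one_iff_deriv, hderiv hG]
    exact ⟨fun x => (hprim hG₁ x).differentiableAt, by simp,
      fun x => (hprim hG x).differentiableAt, hG⟩
  · rw [hderiv hG₁, hderiv hG]
    exact IccExtend_of_mem hcd _ hx

theorem deriv_eq_of_isLocalMin_sub {φ : ℝ → ℝ} {x : ℝ} (hu : DifferentiableAt ℝ u x)
    (hφ : DifferentiableAt ℝ φ x) (hmin : IsLocalMin (fun y => u y - φ y) x) :
    deriv φ x = deriv u x :=
  (sub_eq_zero.1 ((deriv_fun_sub hu hφ).symm.trans hmin.deriv_eq_zero)).symm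

theorem exists_eqOn_deriv_add_const_of_concaveOn_of_convexOn {W : ℝ → ℝ}
    (hu : DifferentiableOn ℝ u (Ioo c d)) (hW : Differentiable ℝ W)
    (hconc : ConcaveOn ℝ (Icc c d) fun x => u x - W x)
    (hconv : ConvexOn ℝ (Icc c d) fun x => u x - W x) :
    ∃ k, EqOn (deriv u) (fun x => deriv W x + k) (Ioo c d) := by
  have hu' {x : ℝ} (hx : x ∈ Ioo c d) : DifferentiableAt ℝ u x :=
    hu.differentiableAt (isOpen_Ioo.mem_nhds hx)
  have hdiff : ∀ x ∈ Ioo c d, DifferentiableAt ℝ (fun x => u x - W x) x := fun x hx =>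
    (hu' hx).sub (hW x)
  have hanti := (hconc.subset Ioo_subset_Icc_self (convex_Ioo c d)).antitoneOn_deriv hdiff
  have hmono := (hconv.subset Ioo_subset_Icc_self (convex_Ioo c d)).monotoneOn_deriv hdiff
  rcases (Ioo c d).eq_empty_or_nonempty with hempty | ⟨z, hz⟩
  · exact ⟨0, by simp [hempty]⟩
  refine ⟨deriv (fun x => u x - W x) z, fun x hx => ?_⟩
  have hxz : deriv (fun x => u x - W x) x = deriv (fun x => u x - W x) z := by
    rcases le_total x z with h | h
    · exact (hmono hx hz h).antisymm (hanti hx hz h)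
    · exact (hanti hz hx h).antisymm (hmono hz hx h)
  rw [← hxz, deriv_fun_sub (hu' hx) (hW x)]
  ring

theorem ViscSolOn.isSlopeOn_deriv_of_continuousOn (ha : Continuous a)
    (hH : Continuous fun z : ℝ × ℝ => H z.1 z.2) (hcd : c ≤ d)
    (hpos : ∀ x ∈ Icc c d, 0 < a x) (hu : ViscSolOn a H lam (Ioo c d) u)
    (hdiff : ∀ x ∈ Icc c d, DifferentiableAt ℝ u x) (hcont : ContinuousOn (deriv u) (Icc c d)) :
    IsSlopeOn a H lam (Ioo c d) (deriv u) := by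
  have hsub : Ioo c d ⊆ Icc c d := Ioo_subset_Icc_self
  have huc : ContinuousOn u (Icc c d) := fun x hx => (hdiff x hx).continuousAt.continuousWithinAt
  have hg : ContinuousOn (fun x => (lam - H x (deriv u x)) / a x) (Icc c d) :=
    (continuousOn_const.sub (hH.comp_continuousOn (continuousOn_id.prodMk hcont))).div
      ha.continuousOn fun x hx => (hpos x hx).ne'
  obtain ⟨W, hW, hW'⟩ := exists_contDiff_two_deriv_deriv_eqOn hcd hg
  have heq {x : ℝ} (hx : x ∈ Ioo c d) : a x * deriv (deriv W) x = lam - H x (deriv u x) := by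
    rw [hW' (hsub hx), mul_div_cancel₀ _ (hpos x (hsub hx)).ne']
  have hconc : ConcaveOn ℝ (Icc c d) fun x => u x - W x :=
    hu.2.concaveOn_sub (fun x hx => hpos x (hsub hx)) huc hW fun x hx φ hφ hmin => by
      rw [deriv_eq_of_isLocalMin_sub (hdiff x (hsub hx)) (hφ.differentiable two_ne_zero x) hmin,
        heq hx]
      simp
  have hconv : ConcaveOn ℝ (Icc c d) fun x => -u x - -W x :=
    hu.1.neg.concaveOn_sub (fun x hx => hpos x (hsub hx)) huc.neg hW.neg fun x hx φ hφ hmin => by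
      rw [deriv_eq_of_isLocalMin_sub (hdiff x (hsub hx)).neg (hφ.differentiable two_ne_zero x) hmin]
      simp only [deriv.fun_neg', deriv.fun_neg, deriv.neg, mul_neg, heq hx, neg_neg]
      linarith
  obtain ⟨k, hk⟩ := exists_eqOn_deriv_add_const_of_concaveOn_of_convexOn
    (fun x hx => (hdiff x (hsub hx)).differentiableWithinAt) (hW.differentiable two_ne_zero) hconc
    (by simpa [Pi.neg_def, neg_add_eq_sub] using hconv.neg)
  intro x hx
  refine HasDerivAt.congr_deriv ?_ (hW' (hsub hx))
  exact ((hW.differentiable_deriv_two x).hasDerivAt.add_const k).congr_of_eventuallyEq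
    (hk.eventuallyEq_of_mem (isOpen_Ioo.mem_nhds hx))

theorem ViscSolOn.differentiableOn_and_isSlopeOn_deriv (hH : IsQuasiconvexHamiltonian H phat)
    (ha : Continuous a) (hpos : ∀ x ∈ Ioo l r, 0 < a x) (hu : ViscSolOn a H lam (Ioo l r) u)
    (huc : ContinuousOn u (Ioo l r)) :
    DifferentiableOn ℝ u (Ioo l r) ∧ IsSlopeOn a H lam (Ioo l r) (deriv u) := by
  suffices h : ∀ x ∈ Ioo l r, DifferentiableAt ℝ u x ∧
      HasDerivAt (deriv u) ((lam - H x (deriv u x)) / a x) x from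
    ⟨fun x hx => (h x hx).1.differentiableWithinAt, fun x hx => (h x hx).2⟩
  intro x hx
  obtain ⟨c₁, hlc₁, hc₁x⟩ := exists_between hx.1
  obtain ⟨c₂, hc₁₂, hc₂x⟩ := exists_between hc₁x
  obtain ⟨c₃, hc₂₃, hc₃x⟩ := exists_between hc₂x
  obtain ⟨d₁, hxd₁, hd₁r⟩ := exists_between hx.2
  obtain ⟨d₂, hxd₂, hd₂₁⟩ := exists_between hxd₁
  obtain ⟨d₃, hxd₃, hd₃₂⟩ := exists_between hxd₂
  have hI₁ : Icc c₁ d₁ ⊆ Ioo l r := Icc_subset_Ioo hlc₁ hd₁r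
  have hI₂ : Icc c₂ d₂ ⊆ Ioo c₁ d₁ := Icc_subset_Ioo hc₁₂ hd₂₁
  have hI₃ : Icc c₃ d₃ ⊆ Ioo c₂ d₂ := Icc_subset_Ioo hc₂₃ hd₃₂
  have hI₂' : Icc c₂ d₂ ⊆ Ioo l r := hI₂.trans (Ioo_subset_Icc_self.trans hI₁)
  have hI₃' : Icc c₃ d₃ ⊆ Ioo l r := hI₃.trans (Ioo_subset_Icc_self.trans hI₂')
  obtain ⟨K, hK⟩ := ((hu.2.mono (Ioo_subset_Icc_self.trans hI₁)).locallyLipschitzOn hH ha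
    (fun y hy => hpos y (hI₁ hy)) (huc.mono hI₁)).mono hI₂
    |>.exists_lipschitzOnWith_of_compact isCompact_Icc
  obtain ⟨hdiff, hcont⟩ := (hu.mono (Ioo_subset_Icc_self.trans hI₂'))
    |>.differentiableOn_and_continuousOn_deriv hH ha (fun y hy => hpos y (hI₂' hy)) hK
  have hdiffAt (y : ℝ) (hy : y ∈ Icc c₃ d₃) : DifferentiableAt ℝ u y :=
    hdiff.differentiableAt (isOpen_Ioo.mem_nhds (hI₃ hy))
  exact ⟨hdiffAt x ⟨hc₃x.le, hxd₃.le⟩, (hu.mono (Ioo_subset_Icc_self.trans hI₃'))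
    |>.isSlopeOn_deriv_of_continuousOn ha hH.continuous (hc₃x.trans hxd₃).le
      (fun y hy => hpos y (hI₃' hy)) hdiffAt (hcont.mono hI₃) x ⟨hc₃x, hxd₃⟩⟩

end Regularity

/-! ### Viscosity solutions where `a` vanishes, and their Lipschitz continuity -/

section Degenerate

variable {a : ℝ → ℝ} {H : ℝ → ℝ → ℝ} {phat u : ℝ → ℝ} {lam x₀ : ℝ}

theorem exists_isLocalMin_sub_parabola {p θ K : ℝ} (hu : Continuous u) (hθ : 0 < θ) (hK : 0 < K)
    (hle : ∀ y ∈ Icc (x₀ - 2 * θ / K) (x₀ + 2 * θ / K),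
      u x₀ + p * (y - x₀) - θ * |y - x₀| ≤ u y) :
    ∃ y, |y - x₀| ≤ θ / K ∧
      IsLocalMin (fun z => u z - ((p + 2 * K * x₀) * z + -K * z ^ 2)) y := by
  set v : ℝ → ℝ := fun z => u z - ((p + 2 * K * x₀) * z + -K * z ^ 2)
  have hδ : 0 < 2 * θ / K := by positivity
  have hlower : ∀ y ∈ Icc (x₀ - 2 * θ / K) (x₀ + 2 * θ / K),
      v x₀ + |y - x₀| * (K * |y - x₀| - θ) ≤ v y := fun y hy => by
    linear_combination hle y hy + K * sq_abs (y - x₀)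
  obtain ⟨y, hy, hmin⟩ := isCompact_Icc.exists_isMinOn (f := v)
    (nonempty_Icc.2 (by linarith : x₀ - 2 * θ / K ≤ x₀ + 2 * θ / K)) (by fun_prop)
  have hdist : |y - x₀| ≤ θ / K := by
    by_contra! hlt
    have hlt' : θ < K * |y - x₀| := (div_lt_iff₀' hK).1 hlt
    have hmin' : v y ≤ v x₀ := hmin ⟨by linarith, by linarith⟩
    have := mul_pos ((by positivity : 0 < θ / K).trans hlt) (sub_pos.2 hlt')
    linarith [hlower y hy]
  have hlt : θ / K < 2 * θ / K := by gcongr; linarith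
  refine ⟨y, hdist, hmin.isLocalMin (Icc_mem_nhds ?_ ?_)⟩ <;> linarith [abs_le.1 hdist]

theorem ViscSuperOn.exists_hamiltonian_lt_near (ha : IsDegenerateDiffusion a)
    (hu : ViscSuperOn a H lam univ u) (huc : Continuous u) (hx₀ : a x₀ = 0) {p θ ε : ℝ}
    (hθ : 0 < θ) (hle : ∀ᶠ y in 𝓝 x₀, u x₀ + p * (y - x₀) - θ * |y - x₀| ≤ u y) (hε : 0 < ε) :
    ∃ y, dist y x₀ < ε ∧ ∃ s ∈ Icc (p - 2 * θ) (p + 2 * θ), H y s < lam + ε := by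
  obtain ⟨C, hC0, hC⟩ := ha.exists_le_sq
  obtain ⟨δ, hδ, hball⟩ := Metric.eventually_nhds_iff.1 hle
  obtain ⟨K, hK⟩ := exists_gt (max (2 * θ / min δ ε) (2 * C * θ ^ 2 / ε))
  obtain ⟨hKδ, hKε⟩ := max_lt_iff.1 hK
  have hK0 : 0 < K := (by positivity : 0 < 2 * θ / min δ ε).trans hKδ
  obtain ⟨hθδ, hθε⟩ := lt_min_iff.1 ((div_lt_comm₀ (lt_min hδ hε) hK0).1 hKδ)
  obtain ⟨y, hy, hmin⟩ := exists_isLocalMin_sub_parabola huc hθ hK0 fun z hz =>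
    hball ((abs_le.2 ⟨by linarith [hz.1], by linarith [hz.2]⟩ : |z - x₀| ≤ _).trans_lt hθδ)
  have hsuper := hu _ (contDiff_affine_add_sq _ _) y (mem_univ y) hmin
  have hcurv : deriv (deriv fun z : ℝ => (p + 2 * K * x₀) * z + -K * z ^ 2) y = 2 * -K := by
    simpa using deriv_deriv_add_affine_add_sq (contDiff_const (c := (0 : ℝ))) _ (-K) y
  rw [hcurv, (hasDerivAt_affine_add_sq _ _ y).deriv] at hsuper
  have hKy : K * |y - x₀| ≤ θ := (le_div_iff₀' hK0).1 hy
  have hay : a y * (2 * K) < ε := by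
    refine lt_of_mul_lt_mul_left ?_ hK0.le
    calc K * (a y * (2 * K)) ≤ K * (C * (y - x₀) ^ 2 * (2 * K)) := by gcongr; exact hC y x₀ hx₀
      _ = 2 * C * (K * |y - x₀|) ^ 2 := by rw [mul_pow, sq_abs]; ring
      _ ≤ 2 * C * θ ^ 2 := by gcongr
      _ < K * ε := (div_lt_iff₀ hε).1 hKε
  obtain ⟨h₁, h₂⟩ := abs_le.1 (by rwa [abs_mul, abs_of_pos hK0] : |K * (y - x₀)| ≤ θ)
  refine ⟨y, ?_, p + 2 * K * x₀ + 2 * -K * y, ⟨by linarith, by linarith⟩, by linarith⟩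
  exact (hy.trans (by gcongr; linarith)).trans_lt hθε

theorem ViscSuperOn.exists_hamiltonian_le (ha : IsDegenerateDiffusion a)
    (hH : Continuous fun z : ℝ × ℝ => H z.1 z.2) (hu : ViscSuperOn a H lam univ u)
    (huc : Continuous u) (hx₀ : a x₀ = 0) {p θ : ℝ} (hθ : 0 < θ)
    (hle : ∀ᶠ y in 𝓝 x₀, u x₀ + p * (y - x₀) - θ * |y - x₀| ≤ u y) :
    ∃ s ∈ Icc (p - 2 * θ) (p + 2 * θ), H x₀ s ≤ lam := by
  by_contra! hgt
  obtain ⟨s₀, hs₀, hmin⟩ := isCompact_Icc.exists_isMinOn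
    (nonempty_Icc.2 (by linarith : p - 2 * θ ≤ p + 2 * θ))
    (hH.comp (.prodMk_right x₀)).continuousOn
  obtain ⟨lam', hlam, hlam'⟩ := exists_between (hgt s₀ hs₀)
  have hnear : ∀ᶠ y in 𝓝 x₀, ∀ s ∈ Icc (p - 2 * θ) (p + 2 * θ), lam' < H y s :=
    isCompact_Icc.eventually_forall_of_forall_eventually fun s hs =>
      hH.continuousAt.eventually_const_lt (hlam'.trans_le (hmin hs))
  obtain ⟨ε, hε, hball⟩ := Metric.eventually_nhds_iff.1 hnear
  obtain ⟨y, hy, s, hs, hlt⟩ := hu.exists_hamiltonian_lt_near ha huc hx₀ hθ hle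
    (lt_min hε (sub_pos.2 hlam))
  linarith [hball (hy.trans_le (min_le_left _ _)) s hs, min_le_right ε (lam' - lam)]

theorem ViscSuperOn.hamiltonian_deriv_le (ha : IsDegenerateDiffusion a)
    (hH : Continuous fun z : ℝ × ℝ => H z.1 z.2) (hu : ViscSuperOn a H lam univ u)
    (huc : Continuous u) (hx₀ : a x₀ = 0) (hdiff : DifferentiableAt ℝ u x₀) :
    H x₀ (deriv u x₀) ≤ lam := by
  have hclosed : IsClosed {s | H x₀ s ≤ lam} :=
    isClosed_le (hH.comp (.prodMk_right x₀)) continuous_const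
  refine hclosed.closure_subset (Metric.mem_closure_iff.2 fun ε hε => ?_)
  have hle : ∀ᶠ y in 𝓝 x₀, u x₀ + deriv u x₀ * (y - x₀) - ε / 4 * |y - x₀| ≤ u y := by
    filter_upwards [hdiff.hasDerivAt.isLittleO.def (by positivity : 0 < ε / 4)] with y hy
    have := neg_le_of_abs_le hy
    simp only [smul_eq_mul, Real.norm_eq_abs] at this
    linarith
  obtain ⟨s, hs, hHs⟩ := hu.exists_hamiltonian_le ha hH huc hx₀ (by positivity) hle
  refine ⟨s, hHs, abs_lt.2 ?_⟩
  constructor <;> linarith [hs.1, hs.2]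

theorem ViscSolOn.hamiltonian_deriv_eq (ha : IsDegenerateDiffusion a)
    (hH : Continuous fun z : ℝ × ℝ => H z.1 z.2) (hu : ViscSolOn a H lam univ u)
    (huc : Continuous u) (hx₀ : a x₀ = 0) (hdiff : DifferentiableAt ℝ u x₀) :
    H x₀ (deriv u x₀) = lam := by
  refine (hu.2.hamiltonian_deriv_le ha hH huc hx₀ hdiff).antisymm ?_
  have := hu.1.neg.hamiltonian_deriv_le ha
    (hH.comp (continuous_fst.prodMk continuous_snd.neg)).neg huc.neg hx₀ hdiff.neg
  simpa using this

theorem ViscSuperOn.exists_hamiltonian_le_of_lipschitzWith (ha : IsDegenerateDiffusion a)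
    (hH : Continuous fun z : ℝ × ℝ => H z.1 z.2) (hu : ViscSuperOn a H lam univ u) {K : NNReal}
    (huK : LipschitzWith K u) (hx₀ : a x₀ = 0) : ∃ s, H x₀ s ≤ lam := by
  obtain ⟨s, -, hs⟩ := hu.exists_hamiltonian_le ha hH huK.continuous hx₀ (p := 0)
    (θ := K + 1) (by positivity) (.of_forall fun y => by
      have := neg_le_of_abs_le (huK.dist_le_mul y x₀)
      rw [Real.dist_eq] at this
      linarith [abs_nonneg (y - x₀)])
  exact ⟨s, hs⟩

theorem exists_isLocalMin_sub_of_lt {x y : ℝ} (huc : ContinuousOn u (Icc x y)) (hxy : x < y)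
    (hlt : u x < u y) : ∃ φ : ℝ → ℝ, ContDiff ℝ 2 φ ∧ (∀ z, 0 < deriv φ z) ∧
      ∃ q ∈ Ioo x y, IsLocalMin (fun z => u z - φ z) q := by
  obtain ⟨z, hz, huz⟩ : ∃ z ∈ Ioo x y, u z < u x + (u y - u x) / 2 := by
    have hnear : ∀ᶠ z in 𝓝[>] x, u z < u x + (u y - u x) / 2 :=
      ((huc x (left_mem_Icc.2 hxy.le)).mono_left (nhdsWithin_le_of_mem (Icc_mem_nhdsGT hxy)))
        |>.eventually_lt_const (by linarith)
    obtain ⟨z, huz, hz⟩ := (hnear.and (Ioo_mem_nhdsGT hxy)).exists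
    exact ⟨z, hz, huz⟩
  set M := log 2 / (z - x)
  have hM : 0 < M := div_pos (log_pos one_lt_two) (sub_pos.2 hz.1)
  have hexp : exp (-(M * (z - x))) = 1 / 2 := by
    rw [div_mul_cancel₀ _ (sub_pos.2 hz.1).ne', exp_neg, exp_log two_pos, one_div]
  have hderiv (t : ℝ) : HasDerivAt (fun t => -((u y - u x) * exp (-(M * (t - x)))))
      ((u y - u x) * (M * exp (-(M * (t - x))))) t :=
    ((((hasDerivAt_id t).sub_const x).const_mul M).neg.exp.const_mul (u y - u x)).neg.congr_deriv
      (by simp only [id_eq, Pi.neg_apply]; ring)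
  refine ⟨fun t => -((u y - u x) * exp (-(M * (t - x)))), by fun_prop, fun t => ?_, ?_⟩
  · rw [(hderiv t).deriv]
    exact mul_pos (sub_pos.2 hlt) (by positivity)
  · refine isCompact_Icc.exists_isLocalMin_mem_open Ioo_subset_Icc_self
      (huc.sub (by fun_prop)) (Ioo_subset_Icc_self hz) (fun t ht => ?_) isOpen_Ioo
    rw [Icc_sdiff_Ioo_same hxy.le] at ht
    simp only [hexp]
    rcases ht with rfl | rfl
    · simp only [sub_self, mul_zero, neg_zero, exp_zero]
      linarith
    · have := mul_pos (sub_pos.2 hlt) (exp_pos (-(M * (t - x))))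
      linarith

theorem sub_le_of_forall_isLocalMin {R : ℝ} (huc : Continuous u)
    (hR : ∀ φ : ℝ → ℝ, ContDiff ℝ 2 φ → ∀ q, IsLocalMin (fun z => u z - φ z) q → deriv φ q ≤ R)
    {x y : ℝ} (hxy : x ≤ y) : u y - u x ≤ R * (y - x) := by
  by_contra! hlt
  obtain ⟨φ, hφ, hφ', q, -, hmin⟩ := exists_isLocalMin_sub_of_lt (u := fun z => u z - R * z)
    (by fun_prop) (hxy.lt_of_ne fun h => by simp [h] at hlt) (by linarith)
  have hlin : ContDiff ℝ 2 fun z : ℝ => R * z := by fun_prop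
  have hderiv : deriv (fun z => R * z + φ z) q = R + deriv φ q := by
    rw [deriv_fun_add (by fun_prop) (hφ.differentiable two_ne_zero q)]
    simp
  linarith [hR _ (hlin.add hφ) q (by simpa only [sub_sub] using hmin), hφ' q]

theorem lipschitzWith_of_forall_isLocalMin {R : NNReal} (huc : Continuous u)
    (hR : ∀ φ : ℝ → ℝ, ContDiff ℝ 2 φ → ∀ q, IsLocalMin (fun z => u z - φ z) q → |deriv φ q| ≤ R) :
    LipschitzWith R u := by
  have hup {x y : ℝ} (hxy : x ≤ y) : u y - u x ≤ R * (y - x) :=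
    sub_le_of_forall_isLocalMin huc (fun φ hφ q hq => (le_abs_self _).trans (hR φ hφ q hq)) hxy
  have hdown {x y : ℝ} (hxy : x ≤ y) : u x - u y ≤ R * (y - x) := by
    have := sub_le_of_forall_isLocalMin (u := fun z => u (-z)) (R := R) (by fun_prop)
      (fun φ hφ q hq => ?_) (neg_le_neg hxy)
    · simp only [neg_neg] at this
      linarith
    · have := hR (fun z => φ (-z)) (hφ.comp contDiff_neg) (-q) ?_
      · rw [deriv_comp_neg, neg_neg, abs_neg] at this
        exact (le_abs_self _).trans this
      · have hmin : IsLocalMin (fun z => u (-z) - φ z) (- -q) := by rwa [neg_neg]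
        simpa [Function.comp_def] using hmin.comp_continuous continuous_neg.continuousAt
  refine LipschitzWith.of_dist_le_mul fun x y => ?_
  wlog hxy : x ≤ y generalizing x y
  · rw [dist_comm, dist_comm x]
    exact this y x (le_of_not_ge hxy)
  rw [dist_comm x, Real.dist_eq, Real.dist_eq, abs_of_nonneg (sub_nonneg.2 hxy), abs_le]
  constructor <;> linarith [hup hxy, hdown hxy]

theorem IsDegenerateDiffusion.exists_isComponent (ha : IsDegenerateDiffusion a) {x : ℝ}
    (hx : 0 < a x) : ∃ l r, IsComponent a l r ∧ x ∈ Ioo l r := by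
  have hclosed : IsClosed {y | a y = 0} := isClosed_eq ha.continuous continuous_const
  obtain ⟨y, hyx, hy⟩ := ha.exists_zero_le x
  obtain ⟨z, hxz, hz⟩ := ha.exists_zero_ge x
  obtain ⟨l, hl, hl'⟩ := (isCompact_Icc.inter_right hclosed).exists_isGreatest
    ⟨y, ⟨le_rfl, hyx⟩, hy⟩
  obtain ⟨r, hr, hr'⟩ := (isCompact_Icc.inter_right hclosed).exists_isLeast
    ⟨z, ⟨hxz, le_rfl⟩, hz⟩
  have hlx : l < x := hl.1.2.lt_of_ne fun h => hx.ne' (h ▸ hl.2)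
  have hxr : x < r := hr.1.1.lt_of_ne fun h => hx.ne' (h ▸ hr.2)
  refine ⟨l, r, ⟨hlx.trans hxr, hl.2, hr.2, fun t ht => ?_⟩, hlx, hxr⟩
  refine (ha.nonneg t).lt_of_ne fun h => ?_
  rcases le_total t x with htx | hxt
  · exact ht.1.not_ge (hl' ⟨⟨hl.1.1.trans ht.1.le, htx⟩, h.symm⟩)
  · exact ht.2.not_ge (hr' ⟨⟨hxt, ht.2.le.trans hr.1.2⟩, h.symm⟩)

theorem ViscSolOn.exists_lipschitzWith (ha : IsDegenerateDiffusion a)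
    (hH : IsQuasiconvexHamiltonian H phat) (hu : ViscSolOn a H lam univ u) (huc : Continuous u) :
    ∃ K, LipschitzWith K u := by
  obtain ⟨R, hR⟩ := hH.exists_superquadraticBeyond lam
  have hR0 : 0 ≤ R := zero_le_one.trans hR.1
  refine ⟨⟨R, hR0⟩, lipschitzWith_of_forall_isLocalMin huc fun φ hφ q hmin => ?_⟩
  rcases (ha.nonneg q).eq_or_lt' with hq | hq
  · by_contra! hlt
    have hsuper := hu.2 φ hφ q (mem_univ q) hmin
    rw [hq, zero_mul, zero_add] at hsuper
    exact hsuper.not_gt (hR.lt hlt.le q)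
  · obtain ⟨l, r, hC, hqlr⟩ := ha.exists_isComponent hq
    obtain ⟨hdiff, hslope⟩ := (hu.mono (subset_univ (Ioo l r)))
      |>.differentiableOn_and_isSlopeOn_deriv hH ha.continuous hC.pos huc.continuousOn
    rw [deriv_eq_of_isLocalMin_sub (hdiff.differentiableAt (isOpen_Ioo.mem_nhds hqlr))
      (hφ.differentiable two_ne_zero q) hmin]
    exact abs_le.2 (hslope.mem_Icc_of_superquadraticBeyond ha hC hR hqlr)

end Degenerate

/-! ### Gluing the slopes of the components -/

section Gluing

variable {a : ℝ → ℝ} {H : ℝ → ℝ → ℝ} {phat f w P : ℝ → ℝ} {lam lam0 l r : ℝ}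

theorem IsComponent.left_le_of_mem {l' r' x : ℝ} (hC : IsComponent a l r)
    (hC' : IsComponent a l' r') (hx : x ∈ Ioo l r) (hx' : x ∈ Ioo l' r') : l ≤ l' := by
  by_contra! hlt
  exact (hC'.pos l ⟨hlt, hx.1.trans hx'.2⟩).ne' hC.left_eq_zero

theorem IsComponent.eq_of_mem {l' r' x : ℝ} (hC : IsComponent a l r) (hC' : IsComponent a l' r')
    (hx : x ∈ Ioo l r) (hx' : x ∈ Ioo l' r') : l = l' ∧ r = r' := by
  have hmem {l r : ℝ} (h : x ∈ Ioo l r) : -x ∈ Ioo (-r) (-l) := ⟨neg_lt_neg h.2, neg_lt_neg h.1⟩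
  exact ⟨(hC.left_le_of_mem hC' hx hx').antisymm (hC'.left_le_of_mem hC hx' hx),
    neg_injective ((hC.reflect.left_le_of_mem hC'.reflect (hmem hx) (hmem hx')).antisymm
      (hC'.reflect.left_le_of_mem hC.reflect (hmem hx') (hmem hx)))⟩

theorem IsDegenerateDiffusion.exists_glue (ha : IsDegenerateDiffusion a)
    {Q : ℝ → ℝ → (ℝ → ℝ) → Prop} (hQ : ∀ l r, IsComponent a l r → ∃ f, Q l r f) (P : ℝ → ℝ) :
    ∃ g : ℝ → ℝ, (∀ x, a x = 0 → g x = P x) ∧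
      ∀ l r, IsComponent a l r → ∃ f, Q l r f ∧ EqOn g f (Ioo l r) := by
  classical
  choose F hF using hQ
  choose L R hLR hmem using fun x (hx : 0 < a x) => ha.exists_isComponent hx
  refine ⟨fun x => if hx : 0 < a x then F _ _ (hLR x hx) x else P x, fun x hx => ?_,
    fun l r hC => ⟨F l r hC, hF l r hC, fun x hx => ?_⟩⟩
  · simp [hx]
  · have hax := hC.pos x hx
    obtain ⟨rfl, rfl⟩ := hC.eq_of_mem (hLR x hax) hx (hmem x hax)
    simp [hax]

/-- The derivative of a solution on the upper branch: a solution `f` of `a f' + H(x, f) = lam`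
where `a > 0` and the larger root of `H(x, ·) = lam` where `a = 0`, continuous at the endpoints of
each component of `{0 < a}` from the inside. -/
structure IsUpperSlope (a : ℝ → ℝ) (H : ℝ → ℝ → ℝ) (phat : ℝ → ℝ) (lam : ℝ) (f : ℝ → ℝ) :
    Prop where
  isSlopeOn : IsSlopeOn a H lam {x | 0 < a x} f
  phat_lt : ∀ x, a x = 0 → phat x < f x
  hamiltonian_eq : ∀ x, a x = 0 → H x (f x) = lam
  tendsto_left : ∀ l r, IsComponent a l r → Tendsto f (𝓝[>] l) (𝓝 (f l))
  tendsto_right : ∀ l r, IsComponent a l r → Tendsto f (𝓝[<] r) (𝓝 (f r))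

theorem exists_isUpperSlope (ha : IsDegenerateDiffusion a) (hH : IsQuasiconvexHamiltonian H phat)
    (hlam : lam0 < lam) (hw : IsSlopeOn a H lam0 {x | 0 < a x} w)
    (hP : ∀ x, a x = 0 → phat x < P x ∧ H x (P x) = lam) :
    ∃ f, IsUpperSlope a H phat lam f ∧ (∀ x, a x = 0 → f x = P x) ∧ ∀ x, 0 < a x → w x ≤ f x := by
  have hwC {l r : ℝ} (hC : IsComponent a l r) : IsSlopeOn a H lam0 (Ioo l r) w := hw.mono hC.pos
  obtain ⟨g, hgP, hg⟩ := ha.exists_glue (fun l r hC => (hwC hC).exists_ge ha hH hC hlam) P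
  have hslope {l r : ℝ} (hC : IsComponent a l r) :
      IsSlopeOn a H lam (Ioo l r) g ∧ ∀ x ∈ Ioo l r, w x ≤ g x := by
    obtain ⟨f, ⟨hf, hwf⟩, hgf⟩ := hg l r hC
    refine ⟨fun x hx => ?_, fun x hx => (hgf hx).symm ▸ hwf x hx⟩
    rw [hgf hx]
    exact (hf x hx).congr_of_eventuallyEq (hgf.eventuallyEq_of_mem (isOpen_Ioo.mem_nhds hx))
  refine ⟨g, ⟨fun x hx => ?_, fun x hx => ?_, fun x hx => ?_, fun l r hC => ?_, fun l r hC => ?_⟩,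
    hgP, fun x hx => ?_⟩
  · obtain ⟨l, r, hC, hxlr⟩ := ha.exists_isComponent hx
    exact (hslope hC).1 x hxlr
  · exact hgP x hx ▸ (hP x hx).1
  · exact hgP x hx ▸ (hP x hx).2
  · obtain ⟨hp, hHp⟩ := hP l hC.left_eq_zero
    rw [hgP l hC.left_eq_zero]
    exact (hslope hC).1.tendsto_left_of_le ha hH hC hlam (hwC hC) (hslope hC).2 hp.le hHp
  · obtain ⟨hp, hHp⟩ := hP r hC.right_eq_zero
    rw [hgP r hC.right_eq_zero]
    exact (hslope hC).1.tendsto_right_of_le ha hH hC hlam (hwC hC) (hslope hC).2 hp.le hHp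
  · obtain ⟨l, r, hC, hxlr⟩ := ha.exists_isComponent hx
    exact (hslope hC).2 x hxlr

theorem IsSlopeOn.ge_of_forall_lt {c d q : ℝ} (hf : IsSlopeOn a H lam (Icc c d) f) (hcd : c ≤ d)
    (ha : ∀ x ∈ Icc c d, 0 < a x) (hq : ∀ x ∈ Icc c d, H x q < lam) (hc : q ≤ f c) : q ≤ f d :=
  neg_le_neg_iff.1 (hf.neg.le_of_forall_lt hcd ha (fun x hx => by simpa using hq x hx)
    (neg_le_neg hc))

theorem IsUpperSlope.mem_Ioo_of_eq_zero (hH : IsQuasiconvexHamiltonian H phat)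
    (hf : IsUpperSlope a H phat lam f) {x q₁ q₂ : ℝ} (hx : a x = 0) (hq : q₁ ≤ q₂)
    (hHq₁ : H x q₁ < lam) (hHq₂ : lam < H x q₂) : f x ∈ Ioo q₁ q₂ := by
  rw [← hf.hamiltonian_eq x hx] at hHq₁ hHq₂
  exact ⟨hH.lt_of_hamiltonian_lt (hf.phat_lt x hx).le hHq₁, hH.lt_of_hamiltonian_lt
    (hH.phat_lt_of_hamiltonian_lt hq (hHq₁.trans hHq₂)).le hHq₂⟩

theorem IsUpperSlope.mem_Icc_of_le (ha : IsDegenerateDiffusion a)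
    (hH : IsQuasiconvexHamiltonian H phat) (hf : IsUpperSlope a H phat lam f) {z x q₁ q₂ : ℝ}
    (hz : a z = 0) (hzx : z ≤ x) (hq : q₁ ≤ q₂) (hHq₁ : ∀ y ∈ Icc z x, H y q₁ < lam)
    (hHq₂ : ∀ y ∈ Icc z x, lam < H y q₂) : f x ∈ Icc q₁ q₂ := by
  rcases (ha.nonneg x).eq_or_lt' with hx | hx
  · exact Ioo_subset_Icc_self (hf.mem_Ioo_of_eq_zero hH hx hq (hHq₁ x (right_mem_Icc.2 hzx))
      (hHq₂ x (right_mem_Icc.2 hzx)))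
  obtain ⟨l, r, hC, hxlr⟩ := ha.exists_isComponent hx
  have hzl : z ≤ l := by
    by_contra! hlz
    exact (hC.pos z ⟨hlz, hzx.trans_lt hxlr.2⟩).ne' hz
  have hl := hf.mem_Ioo_of_eq_zero hH hC.left_eq_zero hq (hHq₁ l ⟨hzl, hxlr.1.le⟩)
    (hHq₂ l ⟨hzl, hxlr.1.le⟩)
  obtain ⟨t, hft, ht⟩ := ((hf.tendsto_left l r hC).eventually (Ioo_mem_nhds hl.1 hl.2)).and
    (Ioo_mem_nhdsGT hxlr.1) |>.exists
  have hpos : ∀ y ∈ Icc t x, 0 < a y := fun y hy => hC.pos y (Icc_subset_Ioo ht.1 hxlr.2 hy)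
  have hslope := hf.isSlopeOn.mono hpos
  have hsub : Icc t x ⊆ Icc z x := Icc_subset_Icc_left (hzl.trans ht.1.le)
  exact ⟨hslope.ge_of_forall_lt ht.2.le hpos (fun y hy => hHq₁ y (hsub hy)) hft.1.le,
    hslope.le_of_forall_lt ht.2.le hpos (fun y hy => hHq₂ y (hsub hy)) hft.2.le⟩

theorem IsDegenerateDiffusion.exists_isComponent_left_or_frequently_eq_zero
    (ha : IsDegenerateDiffusion a) {x₀ : ℝ}
    (hx₀ : a x₀ = 0) : (∃ l, IsComponent a l x₀) ∨ ∃ᶠ z in 𝓝[<] x₀, a z = 0 := by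
  refine or_iff_not_imp_right.2 fun hfreq => ?_
  obtain ⟨c, hc, hcx⟩ := mem_nhdsLT_iff_exists_Ioo_subset.1 (not_frequently.1 hfreq)
  obtain ⟨y, hcy, hyx⟩ := exists_between (mem_Iio.1 hc)
  obtain ⟨l, r, hC, hy⟩ := ha.exists_isComponent ((ha.nonneg y).lt_of_ne' (hcx ⟨hcy, hyx⟩))
  rcases lt_trichotomy r x₀ with hr | rfl | hr
  · exact absurd hC.right_eq_zero (hcx ⟨hcy.trans hy.2, hr⟩)
  · exact ⟨l, hC⟩
  · exact absurd hx₀ (hC.pos x₀ ⟨hy.1.trans hyx, hr⟩).ne'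

theorem IsQuasiconvexHamiltonian.exists_bracket (hH : IsQuasiconvexHamiltonian H phat)
    {x p : ℝ} (hp : phat x < p) {U : Set ℝ} (hU : U ∈ 𝓝 p) :
    ∃ q₁ q₂, q₁ ≤ q₂ ∧ Icc q₁ q₂ ⊆ U ∧ ∀ᶠ y in 𝓝 x, H y q₁ < H x p ∧ H x p < H y q₂ := by
  obtain ⟨b₁, b₂, ⟨hb₁, hb₂⟩, hbU⟩ := mem_nhds_iff_exists_Ioo_subset.1 hU
  obtain ⟨q₁, hq₁, hq₁p⟩ := exists_between (max_lt hp hb₁)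
  obtain ⟨q₂, hpq₂, hq₂⟩ := exists_between hb₂
  obtain ⟨hphat, hb₁q₁⟩ := max_lt_iff.1 hq₁
  have h₁ : H x q₁ < H x p := hH.strictMonoOn x hphat.le hp.le hq₁p
  have h₂ : H x p < H x q₂ := hH.strictMonoOn x hp.le (hp.trans hpq₂).le hpq₂
  exact ⟨q₁, q₂, (hq₁p.trans hpq₂).le, (Icc_subset_Ioo hb₁q₁ hq₂).trans hbU,
    ((hH.continuous.comp (.prodMk_left q₁)).tendsto x).eventually_lt_const h₁ |>.and
      (((hH.continuous.comp (.prodMk_left q₂)).tendsto x).eventually_const_lt h₂)⟩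

theorem IsUpperSlope.continuousAt_of_eq_zero (ha : IsDegenerateDiffusion a)
    (hH : IsQuasiconvexHamiltonian H phat) (hf : IsUpperSlope a H phat lam f) {x₀ : ℝ}
    (hx₀ : a x₀ = 0) : ContinuousAt f x₀ := by
  intro U hU
  obtain ⟨q₁, q₂, hq, hqU, hHq⟩ := hH.exists_bracket (hf.phat_lt x₀ hx₀) hU
  rw [hf.hamiltonian_eq x₀ hx₀] at hHq
  obtain ⟨c, d, hcd, hHcd⟩ := mem_nhds_iff_exists_Ioo_subset.1 hHq
  have hmem {z x : ℝ} (hcz : c < z) (hz : a z = 0) (hzx : z ≤ x) (hxd : x < d) : f x ∈ U :=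
    hqU (hf.mem_Icc_of_le ha hH hz hzx hq (fun y hy => (hHcd (Icc_subset_Ioo hcz hxd hy)).1)
      fun y hy => (hHcd (Icc_subset_Ioo hcz hxd hy)).2)
  rw [mem_map, ← nhdsLT_sup_nhdsGE, mem_sup]
  constructor
  · rcases ha.exists_isComponent_left_or_frequently_eq_zero hx₀ with ⟨l, hC⟩ | hfreq
    · exact hf.tendsto_right l x₀ hC hU
    · obtain ⟨z, hz, hcz⟩ := (hfreq.and_eventually (Ioo_mem_nhdsLT hcd.1)).exists
      filter_upwards [Ioo_mem_nhdsLT hcz.2] with x hx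
      exact hmem hcz.1 hz hx.1.le (hx.2.trans hcd.2)
  · filter_upwards [Ico_mem_nhdsGE hcd.2] with x hx
    exact hmem hcd.1 hx₀ hx.1 hx.2

theorem IsUpperSlope.continuous (ha : IsDegenerateDiffusion a)
    (hH : IsQuasiconvexHamiltonian H phat) (hf : IsUpperSlope a H phat lam f) : Continuous f := by
  refine continuous_iff_continuousAt.2 fun x => ?_
  rcases (ha.nonneg x).eq_or_lt' with hx | hx
  · exact hf.continuousAt_of_eq_zero ha hH hx
  · exact (hf.isSlopeOn x hx).continuousAt

end Gluing

/-! ### Classical solutions, strict comparison and uniqueness -/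

section ClassicalSolutions

variable {a : ℝ → ℝ} {H : ℝ → ℝ → ℝ} {phat u f : ℝ → ℝ} {lam : ℝ} {U : Set ℝ}

theorem deriv_deriv_nonneg_of_isLocalMin {x : ℝ} (hf : ContinuousAt f x) (hmin : IsLocalMin f x) :
    0 ≤ deriv (deriv f) x := by
  by_contra! hneg
  have hmax := isLocalMax_of_deriv_deriv_neg hneg hmin.deriv_eq_zero hf
  have hconst : f =ᶠ[𝓝 x] fun _ => f x := by
    filter_upwards [hmin, hmax] with y hy hy' using le_antisymm hy' hy
  simp [hconst.deriv.deriv_eq] at hneg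

theorem viscSuperOn_of_classical (ha : ∀ x, 0 ≤ a x) (hu : Differentiable ℝ u)
    (hu' : ∀ x, 0 < a x → DifferentiableAt ℝ (deriv u) x)
    (hle : ∀ x, a x * deriv (deriv u) x + H x (deriv u x) ≤ lam) : ViscSuperOn a H lam U u := by
  intro φ hφ x _ hmin
  have hφd : Differentiable ℝ φ := hφ.differentiable two_ne_zero
  rw [deriv_eq_of_isLocalMin_sub (hu x) (hφd x) hmin]
  refine le_trans ?_ (hle x)
  rcases (ha x).eq_or_lt' with hx | hx
  · simp [hx]
  · have hconv := deriv_deriv_nonneg_of_isLocalMin (hu.sub hφd).continuous.continuousAt hmin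
    rw [show deriv (u - φ) = fun y => deriv u y - deriv φ y from
      funext fun y => deriv_sub (hu y) (hφd y),
      deriv_fun_sub (hu' x hx) (hφ.differentiable_deriv_two x), sub_nonneg] at hconv
    gcongr

theorem viscSubOn_of_viscSuperOn_neg
    (hu : ViscSuperOn a (fun x p => -H x (-p)) (-lam) U fun x => -u x) : ViscSubOn a H lam U u := by
  intro φ hφ x hx hmax
  have h := hu (fun y => -φ y) hφ.neg x hx (by
    simpa only [neg_sub, neg_sub_neg] using hmax.neg)
  simp only [deriv.fun_neg', deriv.fun_neg, neg_neg] at h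
  linarith

theorem viscSolOn_of_classical (ha : ∀ x, 0 ≤ a x) (hu : Differentiable ℝ u)
    (hu' : ∀ x, 0 < a x → DifferentiableAt ℝ (deriv u) x)
    (heq : ∀ x, a x * deriv (deriv u) x + H x (deriv u x) = lam) : ViscSolOn a H lam U u := by
  refine ⟨viscSubOn_of_viscSuperOn_neg (viscSuperOn_of_classical ha hu.neg ?_ fun x => ?_),
    viscSuperOn_of_classical ha hu hu' fun x => (heq x).le⟩
  · simpa only [deriv.fun_neg'] using fun x hx => (hu' x hx).fun_neg
  · simp only [deriv.fun_neg', deriv.fun_neg, neg_neg]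
    linarith [heq x]

/-- `u` vanishes at `0` and solves `a u'' + H(x, u') = lam` on `ℝ` both in the viscosity sense and
pointwise, being `C¹` everywhere and `C²` where `a > 0`, with derivative `P` where `a = 0`. -/
structure IsNormalizedClassicalSol (a : ℝ → ℝ) (H : ℝ → ℝ → ℝ) (lam : ℝ) (P u : ℝ → ℝ) : Prop where
  viscSolOn : ViscSolOn a H lam univ u
  map_zero : u 0 = 0
  contDiff : ContDiff ℝ 1 u
  contDiffOn : ContDiffOn ℝ 2 u {x | 0 < a x}
  deriv_eq : ∀ x, a x = 0 → deriv u x = P x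
  equation : ∀ x, a x * deriv (deriv u) x + H x (deriv u x) = lam

theorem IsSlopeOn.contDiffOn_one (ha : Continuous a) (hH : Continuous fun z : ℝ × ℝ => H z.1 z.2)
    (hf : IsSlopeOn a H lam {x | 0 < a x} f) : ContDiffOn ℝ 1 f {x | 0 < a x} := by
  rw [show (1 : WithTop ℕ∞) = 0 + 1 by norm_num,
    contDiffOn_succ_iff_deriv_of_isOpen (isOpen_lt continuous_const ha)]
  refine ⟨fun x hx => (hf x hx).differentiableAt.differentiableWithinAt, by simp, ?_⟩
  have hfield : ContinuousOn (fun x => (lam - H x (f x)) / a x) {x | 0 < a x} :=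
    (continuousOn_const.sub (hH.comp_continuousOn (continuousOn_id.prodMk hf.continuousOn))).div
      ha.continuousOn fun x hx => ne_of_gt hx
  exact contDiffOn_zero.2 (hfield.congr fun x hx => (hf x hx).deriv)

theorem IsUpperSlope.mul_deriv_add_hamiltonian_eq (hf : IsUpperSlope a H phat lam f)
    (ha : ∀ x, 0 ≤ a x) (x : ℝ) : a x * deriv f x + H x (f x) = lam := by
  rcases (ha x).eq_or_lt' with hx | hx
  · rw [hx, zero_mul, zero_add, hf.hamiltonian_eq x hx]
  · rw [(hf.isSlopeOn x hx).deriv, mul_div_cancel₀ _ hx.ne', sub_add_cancel]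

theorem IsUpperSlope.isNormalizedClassicalSol_integral (hf : IsUpperSlope a H phat lam f)
    (ha : IsDegenerateDiffusion a) (hH : IsQuasiconvexHamiltonian H phat) :
    IsNormalizedClassicalSol a H lam f fun x => ∫ t in (0 : ℝ)..x, f t := by
  have hfc : Continuous f := hf.continuous ha hH
  have hu (x : ℝ) : HasDerivAt (fun y => ∫ t in (0 : ℝ)..y, f t) (f x) x :=
    (hfc.integral_hasStrictDerivAt 0 x).hasDerivAt
  have hdiff : Differentiable ℝ fun y => ∫ t in (0 : ℝ)..y, f t :=
    fun x => (hu x).differentiableAt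
  have hderiv : (deriv fun y => ∫ t in (0 : ℝ)..y, f t) = f := funext fun x => (hu x).deriv
  have heq := hf.mul_deriv_add_hamiltonian_eq ha.nonneg
  refine ⟨viscSolOn_of_classical ha.nonneg hdiff (fun x hx => ?_) ?_,
    intervalIntegral.integral_same, contDiff_one_iff_deriv.2 ⟨hdiff, ?_⟩, ?_, ?_, ?_⟩
  · rw [hderiv]
    exact (hf.isSlopeOn x hx).differentiableAt
  · rwa [hderiv]
  · rwa [hderiv]
  · rw [show (2 : WithTop ℕ∞) = 1 + 1 by norm_num,
      contDiffOn_succ_iff_deriv_of_isOpen (isOpen_lt continuous_const ha.continuous), hderiv]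
    exact ⟨hdiff.differentiableOn, by simp, hf.isSlopeOn.contDiffOn_one ha.continuous hH.continuous⟩
  · simp [hderiv]
  · rwa [hderiv]

end ClassicalSolutions

section Comparison

variable {a : ℝ → ℝ} {H : ℝ → ℝ → ℝ} {phat u v w f : ℝ → ℝ} {lam lam0 : ℝ}

theorem ViscSolOn.isSlopeOn_deriv (ha : IsDegenerateDiffusion a)
    (hH : IsQuasiconvexHamiltonian H phat) (hu : ViscSolOn a H lam univ u) (huc : Continuous u) :
    IsSlopeOn a H lam {x | 0 < a x} (deriv u) := by
  intro x hx
  obtain ⟨l, r, hC, hxlr⟩ := ha.exists_isComponent hx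
  exact ((hu.mono (subset_univ (Ioo l r))).differentiableOn_and_isSlopeOn_deriv hH ha.continuous
    hC.pos huc.continuousOn).2 x hxlr

/-- At a contact point the difference `f - w` would have a minimum with positive derivative
`(lam - lam0) / a`. -/
theorem IsSlopeOn.lt_of_le (ha : Continuous a) (hlam : lam0 < lam)
    (hf : IsSlopeOn a H lam {x | 0 < a x} f) (hw : IsSlopeOn a H lam0 {x | 0 < a x} w)
    (hle : ∀ x, 0 < a x → w x ≤ f x) {x : ℝ} (hx : 0 < a x) : w x < f x := by
  refine (hle x hx).lt_of_ne fun heq => ?_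
  have hmin : IsLocalMin (fun y => f y - w y) x := by
    filter_upwards [(ha.tendsto x).eventually (lt_mem_nhds hx)] with y hy
    simpa only [heq, sub_self, sub_nonneg] using hle y hy
  have hzero := hmin.hasDerivAt_eq_zero ((hf x hx).fun_sub (hw x hx))
  rw [heq, ← sub_div, sub_sub_sub_cancel_right] at hzero
  exact (div_pos (sub_pos.2 hlam) hx).ne' hzero

theorem IsUpperSlope.ae_deriv_lt (hf : IsUpperSlope a H phat lam f) (ha : IsDegenerateDiffusion a)
    (hH : IsQuasiconvexHamiltonian H phat) (hlam : lam0 < lam) (hw : ViscSolOn a H lam0 univ w)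
    (hwc : Continuous w) (hle : ∀ x, 0 < a x → deriv w x ≤ f x) : ∀ᵐ x, deriv w x < f x := by
  obtain ⟨K, hK⟩ := hw.exists_lipschitzWith ha hH hwc
  filter_upwards [hK.ae_differentiableAt_real] with x hdiff
  rcases (ha.nonneg x).eq_or_lt' with hx | hx
  · refine hH.lt_of_hamiltonian_lt (hf.phat_lt x hx).le ?_
    rwa [hw.hamiltonian_deriv_eq ha hH.continuous hwc hx hdiff, hf.hamiltonian_eq x hx]
  · exact hf.isSlopeOn.lt_of_le ha.continuous hlam (hw.isSlopeOn_deriv ha hH hwc) hle hx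

theorem le_of_ae_lt_of_continuousOn {s : Set ℝ} (hs : IsOpen s) (hf : ContinuousOn f s)
    (hw : ContinuousOn w s) (hae : ∀ᵐ x, w x < f x) {x : ℝ} (hx : x ∈ s) : w x ≤ f x := by
  by_contra! hlt
  have hnear : ∀ᶠ y in 𝓝 x, f y < w y :=
    (hf.continuousAt (hs.mem_nhds hx)).eventually_lt (hw.continuousAt (hs.mem_nhds hx)) hlt
  obtain ⟨y, hy, hy'⟩ := ((mem_closure_iff_frequently.1 (Measure.dense_of_ae hae x)).and_eventually
    hnear).exists
  exact lt_asymm hy hy'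

theorem IsUpperSlope.ae_deriv_eq (hf : IsUpperSlope a H phat lam f) (ha : IsDegenerateDiffusion a)
    (hH : IsQuasiconvexHamiltonian H phat) (hlam : lam0 < lam) (hw : ViscSolOn a H lam0 univ w)
    (hwc : Continuous w) (hv : ViscSolOn a H lam univ v) (hvc : Continuous v)
    (hae : ∀ᵐ x, deriv w x < deriv v x) : ∀ᵐ x, deriv v x = f x := by
  obtain ⟨K, hK⟩ := hw.exists_lipschitzWith ha hH hwc
  obtain ⟨L, hL⟩ := hv.exists_lipschitzWith ha hH hvc
  have hw' := hw.isSlopeOn_deriv ha hH hwc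
  have hv' := hv.isSlopeOn_deriv ha hH hvc
  filter_upwards [hK.ae_differentiableAt_real, hL.ae_differentiableAt_real, hae]
    with x hwx hvx hlt
  rcases (ha.nonneg x).eq_or_lt' with hx | hx
  · have hHw := hw.hamiltonian_deriv_eq ha hH.continuous hwc hx hwx
    have hHv := hv.hamiltonian_deriv_eq ha hH.continuous hvc hx hvx
    have hphat := hH.phat_lt_of_hamiltonian_lt hlt.le (by rwa [hHw, hHv])
    exact (hH.strictMonoOn x).injOn hphat.le (hf.phat_lt x hx).le
      (hHv.trans (hf.hamiltonian_eq x hx).symm)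
  · obtain ⟨l, r, hC, hxlr⟩ := ha.exists_isComponent hx
    have hl := hC.left_eq_zero
    have hle (y : ℝ) (hy : y ∈ Ioo l r) : deriv w y ≤ deriv v y :=
      le_of_ae_lt_of_continuousOn isOpen_Ioo (hv'.mono hC.pos).continuousOn
        (hw'.mono hC.pos).continuousOn hae hy
    exact (hv'.mono hC.pos).eqOn_of_tendsto hH ha.continuous hC (hf.isSlopeOn.mono hC.pos)
      (hf.phat_lt l hl) ((hv'.mono hC.pos).tendsto_left_of_le ha hH hC hlam (hw'.mono hC.pos) hle
        (hf.phat_lt l hl).le (hf.hamiltonian_eq l hl)) (hf.tendsto_left l r hC) hxlr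

theorem eq_integral_of_ae_deriv_eq {K : NNReal} (hv : LipschitzWith K v)
    (hv0 : v 0 = 0) (hae : ∀ᵐ x, deriv v x = f x) : v = fun x => ∫ t in (0 : ℝ)..x, f t := by
  funext x
  calc v x = v x - v 0 := by rw [hv0, sub_zero]
    _ = ∫ t in (0 : ℝ)..x, deriv v t :=
      hv.lipschitzOnWith.absolutelyContinuousOnInterval.integral_deriv_eq_sub.symm
    _ = ∫ t in (0 : ℝ)..x, f t := intervalIntegral.integral_congr_ae (hae.mono fun y hy _ => hy)

theorem IsQuasiconvexHamiltonian.hamiltonian_phat_le (hH : IsQuasiconvexHamiltonian H phat)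
    (x p : ℝ) : H x (phat x) ≤ H x p := by
  rcases le_total p (phat x) with hp | hp
  · exact (hH.strictAntiOn x).antitoneOn hp self_mem_Iic hp
  · exact (hH.strictMonoOn x).monotoneOn self_mem_Ici hp hp

theorem exists_isNormalizedClassicalSol_deriv_gt {P : ℝ → ℝ} (ha : IsDegenerateDiffusion a)
    (hH : IsQuasiconvexHamiltonian H phat)
    (hP : ∀ x, H x (phat x) < lam → phat x < P x ∧ H x (P x) = lam)
    (hlam : lam0 < lam) (hw : ViscSolOn a H lam0 univ w) (hwc : Continuous w) :
    ∃ u, IsNormalizedClassicalSol a H lam P u ∧ (∀ᵐ x, deriv w x < deriv u x) ∧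
      ∀ z v, Continuous z → ViscSolOn a H lam0 univ z → Continuous v → ViscSolOn a H lam univ v →
        v 0 = 0 → (∀ᵐ x, deriv z x < deriv v x) → v = u := by
  obtain ⟨K, hK⟩ := hw.exists_lipschitzWith ha hH hwc
  have hP' (x : ℝ) (hx : a x = 0) : phat x < P x ∧ H x (P x) = lam := by
    obtain ⟨s, hs⟩ := hw.2.exists_hamiltonian_le_of_lipschitzWith ha hH.continuous hK hx
    exact hP x (((hH.hamiltonian_phat_le x s).trans hs).trans_lt hlam)
  obtain ⟨f, hf, hfP, hwf⟩ := exists_isUpperSlope ha hH hlam (hw.isSlopeOn_deriv ha hH hwc) hP'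
  have hu := hf.isNormalizedClassicalSol_integral ha hH
  have hderiv : (deriv fun x => ∫ t in (0 : ℝ)..x, f t) = f := by
    funext x
    exact ((hf.continuous ha hH).integral_hasStrictDerivAt 0 x).hasDerivAt.deriv
  refine ⟨_, { hu with deriv_eq := fun x hx => (hu.deriv_eq x hx).trans (hfP x hx) }, ?_, ?_⟩
  · rw [hderiv]
    exact hf.ae_deriv_lt ha hH hlam hw hwc hwf
  · intro z v hzc hz hvc hv hv0 hae
    obtain ⟨L, hL⟩ := hv.exists_lipschitzWith ha hH hvc
    exact eq_integral_of_ae_deriv_eq hL hv0 (hf.ae_deriv_eq ha hH hlam hz hzc hv hvc hae)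

end Comparison

section LowerBranch

variable {a : ℝ → ℝ} {H : ℝ → ℝ → ℝ} {phat u w P : ℝ → ℝ} {lam lam0 : ℝ}

theorem deriv_deriv_comp_neg (f : ℝ → ℝ) (x : ℝ) :
    deriv (deriv fun y => f (-y)) x = deriv (deriv f) (-x) := by
  rw [show (deriv fun y => f (-y)) = fun y => -deriv f (-y) from funext fun y => deriv_comp_neg f y,
    deriv.fun_neg, deriv_comp_neg (deriv f), neg_neg]

theorem ViscSuperOn.reflect (hu : ViscSuperOn a H lam univ u) :
    ViscSuperOn (fun x => a (-x)) (fun x p => H (-x) (-p)) lam univ fun x => u (-x) := by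
  intro φ hφ x _ hmin
  rw [← neg_neg x] at hmin
  have h := hu (fun y => φ (-y)) (hφ.comp contDiff_neg) (-x) (mem_univ _) (by
    simpa [Function.comp_def] using hmin.comp_continuous continuous_neg.continuousAt)
  rwa [deriv_deriv_comp_neg, deriv_comp_neg, neg_neg] at h

theorem ViscSolOn.reflect (hu : ViscSolOn a H lam univ u) :
    ViscSolOn (fun x => a (-x)) (fun x p => H (-x) (-p)) lam univ fun x => u (-x) :=
  ⟨viscSubOn_of_viscSuperOn_neg hu.1.neg.reflect, hu.2.reflect⟩

theorem IsNormalizedClassicalSol.reflect (hu : IsNormalizedClassicalSol a H lam P u) :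
    IsNormalizedClassicalSol (fun x => a (-x)) (fun x p => H (-x) (-p)) lam (fun x => -P (-x))
      fun x => u (-x) where
  viscSolOn := hu.viscSolOn.reflect
  map_zero := by simpa using hu.map_zero
  contDiff := hu.contDiff.comp contDiff_neg
  contDiffOn := hu.contDiffOn.comp contDiff_neg.contDiffOn fun _ hx => hx
  deriv_eq x hx := by rw [deriv_comp_neg, hu.deriv_eq (-x) hx]
  equation x := by simpa only [deriv_deriv_comp_neg, deriv_comp_neg, neg_neg] using hu.equation (-x)

theorem ae_deriv_comp_neg_lt (h : ∀ᵐ x, deriv u x < deriv w x) :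
    ∀ᵐ x, (deriv fun y => w (-y)) x < (deriv fun y => u (-y)) x := by
  filter_upwards [(Measure.measurePreserving_neg (volume : Measure ℝ)).quasiMeasurePreserving.ae h]
    with x hx
  simpa only [deriv_comp_neg, neg_lt_neg_iff] using hx

theorem exists_isNormalizedClassicalSol_deriv_lt (ha : IsDegenerateDiffusion a)
    (hH : IsQuasiconvexHamiltonian H phat)
    (hP : ∀ x, H x (phat x) < lam → P x < phat x ∧ H x (P x) = lam)
    (hlam : lam0 < lam) (hw : ViscSolOn a H lam0 univ w) (hwc : Continuous w) :
    ∃ u, IsNormalizedClassicalSol a H lam P u ∧ (∀ᵐ x, deriv u x < deriv w x) ∧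
      ∀ z v, Continuous z → ViscSolOn a H lam0 univ z → Continuous v → ViscSolOn a H lam univ v →
        v 0 = 0 → (∀ᵐ x, deriv v x < deriv z x) → v = u := by
  obtain ⟨u, hu, hwu, huniq⟩ := exists_isNormalizedClassicalSol_deriv_gt
    (P := fun x => -P (-x)) ha.reflect hH.reflect (fun x hx => by
      simpa only [neg_neg, neg_lt_neg_iff] using hP (-x) (by simpa only [neg_neg] using hx))
    hlam hw.reflect (hwc.comp continuous_neg)
  refine ⟨fun x => u (-x), by simpa only [neg_neg] using hu.reflect,
    by simpa only [neg_neg] using ae_deriv_comp_neg_lt hwu, fun z v hzc hz hvc hv hv0 hae => ?_⟩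
  have hvu := huniq (fun x => z (-x)) (fun x => v (-x)) (hzc.comp continuous_neg) hz.reflect
    (hvc.comp continuous_neg) hv.reflect (by simpa only [neg_zero] using hv0)
    (ae_deriv_comp_neg_lt hae)
  simp only [← hvu, neg_neg]

end LowerBranch

section Hypotheses

variable {a : ℝ → ℝ} {H : ℝ → ℝ → ℝ} {phat : ℝ → ℝ}

theorem CondA1'.exists_zero_le (ha : CondA1' a) (hnonneg : ∀ x, 0 ≤ a x) (x : ℝ) :
    ∃ y ≤ x, a y = 0 := by
  by_contra! hne
  have hpos : Iic x ⊆ {y | 0 < a y} := fun y hy => (hnonneg y).lt_of_ne' (hne y hy)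
  have hsub := isPreconnected_Iic.subset_connectedComponentIn self_mem_Iic hpos
  exact not_bddBelow_Iic x ((ha.2 x (hpos self_mem_Iic)).subset hsub).bddBelow

theorem CondA1'.exists_zero_ge (ha : CondA1' a) (hnonneg : ∀ x, 0 ≤ a x) (x : ℝ) :
    ∃ y ≥ x, a y = 0 := by
  by_contra! hne
  have hpos : Ici x ⊆ {y | 0 < a y} := fun y hy => (hnonneg y).lt_of_ne' (hne y hy)
  have hsub := isPreconnected_Ici.subset_connectedComponentIn self_mem_Ici hpos
  exact not_bddAbove_Ici x ((ha.2 x (hpos self_mem_Ici)).subset hsub).bddAbove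

theorem CondA1'.isDegenerateDiffusion {κ : ℝ} (ha : CondA1' a) (hnonneg : ∀ x, 0 ≤ a x)
    (hκ : 0 < κ) (hlip : ∀ x y, |√(a x) - √(a y)| ≤ κ * |x - y|) : IsDegenerateDiffusion a where
  nonneg := hnonneg
  continuous := by
    have hsqrt : Continuous fun x => √(a x) :=
      (LipschitzWith.of_dist_le_mul (K := ⟨κ, hκ.le⟩) hlip).continuous
    simpa only [Pi.pow_def, sq_sqrt (hnonneg _)] using hsqrt.pow 2
  exists_le_sq := by
    refine ⟨κ ^ 2, by positivity, fun x y hy => ?_⟩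
    have h : √(a x) ≤ κ * |x - y| := by
      simpa only [hy, sqrt_zero, sub_zero, abs_of_nonneg (sqrt_nonneg _)] using hlip x y
    calc a x = √(a x) ^ 2 := (sq_sqrt (hnonneg x)).symm
      _ ≤ (κ * |x - y|) ^ 2 := by gcongr
      _ = κ ^ 2 * (x - y) ^ 2 := by rw [mul_pow, sq_abs]
  exists_zero_le := ha.exists_zero_le hnonneg
  exists_zero_ge := ha.exists_zero_ge hnonneg

theorem HamClass.continuous {α0 α1 γ : ℝ} (hγ : 1 ≤ γ) (hH : HamClass α0 α1 γ H) :
    Continuous fun z : ℝ × ℝ => H z.1 z.2 := by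
  obtain ⟨-, -, hp, hx⟩ := hH
  refine continuous_iff_continuousAt.2 fun ⟨x, p⟩ => tendsto_iff_dist_tendsto_zero.2 ?_
  have hbound : Continuous fun z : ℝ × ℝ =>
      α1 * (|z.2| + |p| + 1) ^ (γ - 1) * |z.2 - p| + α1 * (|p| ^ γ + 1) * |z.1 - x| := by
    have hpow : Continuous fun z : ℝ × ℝ => (|z.2| + |p| + 1) ^ (γ - 1) :=
      Continuous.rpow_const (by fun_prop) fun _ => Or.inr (by linarith)
    fun_prop
  refine squeeze_zero (fun _ => dist_nonneg) (fun z => ?_)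
    (by simpa using hbound.tendsto (x, p))
  exact (dist_triangle (H z.1 z.2) (H z.1 p) (H x p)).trans (add_le_add (hp _ _ _) (hx _ _ _))

theorem HamClass.exists_lipschitzOnWith {α0 α1 γ : ℝ} (hα1 : 0 ≤ α1) (hγ : 1 ≤ γ)
    (hH : HamClass α0 α1 γ H) (M : ℝ) :
    ∃ K : NNReal, ∀ x, LipschitzOnWith K (H x) (Icc (-M) M) := by
  refine ⟨(α1 * (M + M + 1) ^ (γ - 1)).toNNReal, fun x => ?_⟩
  refine LipschitzOnWith.of_dist_le_mul fun p hp q hq => (hH.2.2.1 x p q).trans ?_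
  rw [← Real.dist_eq]
  refine mul_le_mul_of_nonneg_right (le_trans ?_ (Real.le_coe_toNNReal _)) dist_nonneg
  have hp' := abs_le.2 hp
  have hq' := abs_le.2 hq
  gcongr

theorem HamClass.exists_superquadraticBeyond {α0 α1 γ : ℝ} (hα0 : 0 < α0) (hγ : 2 ≤ γ)
    (hH : HamClass α0 α1 γ H) (lam : ℝ) : ∃ R, SuperquadraticBeyond H lam R := by
  refine ⟨max 1 (2 * (1 / α0 + |lam|) / α0), le_max_left _ _, α0 / 2, by positivity,
    fun x p hp => ?_⟩
  have hp1 : 1 ≤ |p| := (le_max_left _ _).trans hp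
  have hsq : p ^ 2 ≤ |p| ^ γ := by
    rw [← sq_abs, ← rpow_natCast]
    exact rpow_le_rpow_of_exponent_le hp1 (by simpa using hγ)
  have habs : |p| ≤ p ^ 2 := by
    rw [← sq_abs]
    exact le_self_pow₀ hp1 two_ne_zero
  have hlarge : 2 * (1 / α0 + |lam|) ≤ p ^ 2 * α0 :=
    (div_le_iff₀ hα0).1 (((le_max_right _ _).trans hp).trans habs)
  linarith [hH.1 x p, mul_le_mul_of_nonneg_left hsq hα0.le, le_abs_self lam]

theorem HamSqc.isQuasiconvexHamiltonian {α0 α1 γ η : ℝ} (hα0 : 0 < α0) (hα1 : 0 ≤ α1) (hγ : 2 ≤ γ)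
    (hη : 0 < η) (hH : HamSqc α0 α1 γ η H phat) : IsQuasiconvexHamiltonian H phat where
  continuous := hH.1.continuous (one_le_two.trans hγ)
  exists_lipschitzOnWith := hH.1.exists_lipschitzOnWith hα1 (one_le_two.trans hγ)
  exists_superquadraticBeyond := hH.1.exists_superquadraticBeyond hα0 hγ
  strictAntiOn x p _ q hq hpq := sub_pos.1 <|
    (mul_pos hη (abs_pos.2 (sub_ne_zero.2 hpq.ne))).trans_le (hH.2.2.2.1 x p q hpq hq)
  strictMonoOn x p hp q _ hpq := sub_pos.1 <|
    (mul_pos hη (abs_pos.2 (sub_ne_zero.2 hpq.ne))).trans_le (hH.2.2.2.2 x p q hp hpq)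

theorem mem_Ioo_and_eq_of_setOf_le_eq_Icc {f : ℝ → ℝ} {lam p m M : ℝ} (hf : Continuous f)
    (hIcc : {q | f q ≤ lam} = Icc m M) (hp : f p < lam) : p ∈ Ioo m M ∧ f m = lam ∧ f M = lam := by
  have hmem : p ∈ Ioo m M := by
    rw [← interior_Icc, ← hIcc]
    exact interior_maximal (fun q (hq : f q < lam) => hq.le) (isOpen_lt hf continuous_const) hp
  have hfrontier : frontier {q | f q ≤ lam} ⊆ {q | f q = lam} :=
    frontier_le_subset_eq hf continuous_const
  rw [hIcc, frontier_Icc (hmem.1.trans hmem.2).le] at hfrontier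
  exact ⟨hmem, hfrontier (mem_insert m {M}), hfrontier (mem_insert_of_mem m rfl)⟩

end Hypotheses

theorem statement_15_general {a : ℝ → ℝ} {H : ℝ → ℝ → ℝ} {phat pm pp w : ℝ → ℝ} {lam lam0 : ℝ}
    (ha : IsDegenerateDiffusion a) (hH : IsQuasiconvexHamiltonian H phat)
    (hp : ∀ x, H x (phat x) ≤ lam → {p | H x p ≤ lam} = Icc (pm x) (pp x)) (hlam : lam0 < lam)
    (hwc : Continuous w) (hw : ViscSolOn a H lam0 univ w) :
    (∃ u, IsNormalizedClassicalSol a H lam pp u ∧ (∀ᵐ x, deriv w x < deriv u x) ∧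
      ∀ z v, Continuous z → ViscSolOn a H lam0 univ z → Continuous v → ViscSolOn a H lam univ v →
        v 0 = 0 → (∀ᵐ x, deriv z x < deriv v x) → v = u) ∧
    ∃ u, IsNormalizedClassicalSol a H lam pm u ∧ (∀ᵐ x, deriv u x < deriv w x) ∧
      ∀ z v, Continuous z → ViscSolOn a H lam0 univ z → Continuous v → ViscSolOn a H lam univ v →
        v 0 = 0 → (∀ᵐ x, deriv v x < deriv z x) → v = u := by
  have hroots (x : ℝ) (hx : H x (phat x) < lam) :
      phat x ∈ Ioo (pm x) (pp x) ∧ H x (pm x) = lam ∧ H x (pp x) = lam :=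
    mem_Ioo_and_eq_of_setOf_le_eq_Icc (hH.continuous.comp (.prodMk_right x)) (hp x hx.le) hx
  exact ⟨exists_isNormalizedClassicalSol_deriv_gt ha hH
      (fun x hx => ⟨(hroots x hx).1.2, (hroots x hx).2.2⟩) hlam hw hwc,
    exists_isNormalizedClassicalSol_deriv_lt ha hH
      (fun x hx => ⟨(hroots x hx).1.1, (hroots x hx).2.1⟩) hlam hw hwc⟩

/-- Theorem `appC teo existence corrector`: for `lam > λ₀` there are
unique viscosity solutions `u⁺_lam` (resp. `u⁻_lam`) of `a u'' + H(x,u') = lam` with value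
`0` at the origin and derivative a.e. above (resp. below) `u'_{λ₀}`; they are `C¹` on `ℝ`,
`C²` on `A := {a > 0}`, satisfy `(u^±_lam)' = p^±_lam` on `{a = 0}`, solve the equation
classically (pointwise), and do not depend on the choice of the critical solution. -/
theorem statement_15
    (a : ℝ → ℝ) (H : ℝ → ℝ → ℝ) (phat : ℝ → ℝ) (pm pp : ℝ → ℝ → ℝ)
    (κ α0 α1 γ η : ℝ)
    (harange : ∀ x, a x ∈ Set.Icc (0:ℝ) 1)
    (hκ : 0 < κ) (hA2 : ∀ x y : ℝ, |Real.sqrt (a x) - Real.sqrt (a y)| ≤ κ * |x - y|)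
    (hA1' : CondA1' a)
    (hα0 : 0 < α0) (hα1 : 0 < α1) (hγ : 2 < γ) (hη : 0 < η)
    (hH : HamSqc α0 α1 γ η H phat)
    (hp : ∀ lam x : ℝ, H x (phat x) ≤ lam →
      {p : ℝ | H x p ≤ lam} = Set.Icc (pm lam x) (pp lam x))
    (lam0 : ℝ) (hlam0 : lam0 = CriticalValue a H)
    (lam : ℝ) (hlam : lam0 < lam)
    (ulam0 : ℝ → ℝ)
    (hulip : ∃ L : NNReal, LipschitzWith L ulam0)
    (husol : ViscSolOn a H lam0 Set.univ ulam0) :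
    (∃ u : ℝ → ℝ,
      Continuous u ∧ ViscSolOn a H lam Set.univ u ∧ u 0 = 0 ∧
      (∀ᵐ x ∂(volume : Measure ℝ), deriv ulam0 x < deriv u x) ∧
      ContDiff ℝ 1 u ∧ ContDiffOn ℝ 2 u {x : ℝ | 0 < a x} ∧
      (∀ x : ℝ, a x = 0 → deriv u x = pp lam x) ∧
      (∀ x : ℝ, a x * deriv (deriv u) x + H x (deriv u x) = lam) ∧
      (∀ w v : ℝ → ℝ,
        (∃ L : NNReal, LipschitzWith L w) → ViscSolOn a H lam0 Set.univ w →
        Continuous v → ViscSolOn a H lam Set.univ v → v 0 = 0 →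
        (∀ᵐ x ∂(volume : Measure ℝ), deriv w x < deriv v x) → v = u)) ∧
    (∃ u : ℝ → ℝ,
      Continuous u ∧ ViscSolOn a H lam Set.univ u ∧ u 0 = 0 ∧
      (∀ᵐ x ∂(volume : Measure ℝ), deriv u x < deriv ulam0 x) ∧
      ContDiff ℝ 1 u ∧ ContDiffOn ℝ 2 u {x : ℝ | 0 < a x} ∧
      (∀ x : ℝ, a x = 0 → deriv u x = pm lam x) ∧
      (∀ x : ℝ, a x * deriv (deriv u) x + H x (deriv u x) = lam) ∧
      (∀ w v : ℝ → ℝ,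
        (∃ L : NNReal, LipschitzWith L w) → ViscSolOn a H lam0 Set.univ w →
        Continuous v → ViscSolOn a H lam Set.univ v → v 0 = 0 →
        (∀ᵐ x ∂(volume : Measure ℝ), deriv v x < deriv w x) → v = u)) := by
  obtain ⟨L, hL⟩ := hulip
  obtain ⟨⟨u, hu, hgt, huniq⟩, v, hv, hlt, hvniq⟩ := statement_15_general
    (hA1'.isDegenerateDiffusion (fun x => (harange x).1) hκ hA2)
    (hH.isQuasiconvexHamiltonian hα0 hα1.le hγ.le hη) (hp lam) hlam hL.continuous husol
  exact ⟨⟨u, hu.contDiff.continuous, hu.viscSolOn, hu.map_zero, hgt, hu.contDiff, hu.contDiffOn,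
      hu.deriv_eq, hu.equation, fun z w ⟨_, hz⟩ => huniq z w hz.continuous⟩,
    ⟨v, hv.contDiff.continuous, hv.viscSolOn, hv.map_zero, hlt, hv.contDiff, hv.contDiffOn,
      hv.deriv_eq, hv.equation, fun z w ⟨_, hz⟩ => hvniq z w hz.continuous⟩⟩
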